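/- arXiv:1708.08599 — 3 statements merged into one kernel-verified Lean document; each statement's English description precedes it below -/
import Mathlib

section
/- Let f : ℝ_{>0} → ℝ_{>2} be a function increasing monotonically to ∞ satisfying f(x) = O((log x)^{−7/3} x^{1/3}), and let ϑ : ℝ_{>0} → ℝ_{>1} be monotonically increasing to ∞ with ϑ(x) = O(x^{1/4}) and ϑ(2^{j+1})/ϑ(2^j) → 1 as j → ∞, such that the series Σ_{n≥1} 1/(n f(n) ϑ(n)) diverges. For each j ∈ ℕ set B_j := 2^j / ( f(2^j) · √(ϑ(2^j)) ) and b_j := (2/3)·B_j. Then there exists a constant C > 0 such that the set of α ∈ (0,1) for which there are infinitely many j admitting an integer n with b_j ≤ n ≤ B_j and ‖nα‖ ≤ C · 2^{−j} · (ϑ(2^j))^{−1/2} has full Lebesgue measure. -/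
open Filter MeasureTheory

/-- `B_j := 2^j / (f(2^j) √(ϑ(2^j)))`. -/
noncomputable def Bbig (f ϑ : ℝ → ℝ) (j : ℕ) : ℝ :=
  (2 : ℝ) ^ j / (f ((2 : ℝ) ^ j) * Real.sqrt (ϑ ((2 : ℝ) ^ j)))

/-- `b_j := (2/3) B_j`. -/
noncomputable def bsmall (f ϑ : ℝ → ℝ) (j : ℕ) : ℝ := (2 / 3) * Bbig f ϑ j

/-- `M := ∪_{j ≥ 1} {n ∈ ℕ : b_j ≤ n ≤ B_j}`. -/
def Mset (f ϑ : ℝ → ℝ) : Set ℕ :=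
  {n : ℕ | ∃ j : ℕ, 1 ≤ j ∧ bsmall f ϑ j ≤ (n : ℝ) ∧ (n : ℝ) ≤ Bbig f ϑ j}

/-- Naive height of a rational number (in lowest terms). -/
def height (q : ℚ) : ℕ := max q.num.natAbs q.den

/-- Distance from a real number to the nearest integer. -/
noncomputable def dni (x : ℝ) : ℝ := |x - round x|

open scoped Finset

/-- The fractions with some (not necessarily least) denominator in `[2B/3, B]` that lie within
distance `ρ` of `c`. -/
noncomputable def fracsNear (B c ρ : ℝ) : Finset ℝ :=
  (Finset.Icc ⌈2 / 3 * B⌉₊ ⌊B⌋₊).biUnion fun n =>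
    (Finset.Icc ⌈(n : ℝ) * (c - ρ)⌉ ⌊(n : ℝ) * (c + ρ)⌋).image fun p : ℤ => (p : ℝ) / n

lemma mem_fracsNear {B c ρ x : ℝ} (hB : 0 < B) :
    x ∈ fracsNear B c ρ ↔
      ∃ (n : ℕ) (p : ℤ), 2 / 3 * B ≤ n ∧ (n : ℝ) ≤ B ∧ x = p / n ∧ |x - c| ≤ ρ := by
  simp only [fracsNear, Finset.mem_biUnion, Finset.mem_Icc, Finset.mem_image, Nat.ceil_le,
    Nat.le_floor_iff hB.le, Int.ceil_le, Int.le_floor, abs_le]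
  constructor
  · rintro ⟨n, ⟨h1, h2⟩, p, ⟨h3, h4⟩, rfl⟩
    have hn : (0 : ℝ) < n := by linarith
    refine ⟨n, p, h1, h2, rfl, ?_, ?_⟩
    · rw [neg_le_sub_iff_le_add, ← sub_le_iff_le_add, le_div_iff₀ hn]
      linarith
    · rw [sub_le_iff_le_add, div_le_iff₀ hn]
      linarith
  · rintro ⟨n, p, h1, h2, rfl, h3, h4⟩
    have hn : (0 : ℝ) < n := by linarith
    rw [neg_le_sub_iff_le_add, ← sub_le_iff_le_add, le_div_iff₀ hn] at h3
    rw [sub_le_iff_le_add, div_le_iff₀ hn] at h4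
    exact ⟨n, ⟨h1, h2⟩, p, ⟨by linarith, by linarith⟩, rfl⟩

/-- Distinct fractions with denominators at most `B` are at distance at least `1 / B ^ 2`. -/
lemma fracsNear_separated {B c ρ : ℝ} (hB : 0 < B) :
    (fracsNear B c ρ : Set ℝ).Pairwise fun x y => 1 / B ^ 2 ≤ |x - y| := by
  intro x hx y hy hxy
  obtain ⟨n, p, hn, hnB, rfl, -⟩ := (mem_fracsNear hB).1 hx
  obtain ⟨m, q, hm, hmB, rfl, -⟩ := (mem_fracsNear hB).1 hy
  have hn0 : (0 : ℝ) < n := by linarith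
  have hm0 : (0 : ℝ) < m := by linarith
  have hne : p * m - n * q ≠ 0 := by
    intro h
    apply hxy
    rw [div_eq_div_iff hn0.ne' hm0.ne']
    have : (p : ℝ) * m - n * q = 0 := by exact_mod_cast h
    linarith
  have h1 : (1 : ℝ) ≤ |(p : ℝ) * m - n * q| := by exact_mod_cast Int.one_le_abs hne
  rw [div_sub_div _ _ hn0.ne' hm0.ne', abs_div, abs_of_pos (mul_pos hn0 hm0)]
  have : (n : ℝ) * m ≤ B ^ 2 := by nlinarith
  gcongr

/-- A finite set of reals with gaps at least `1 / N` contained in a ball of radius `s` has at most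
`2 s N + 1` elements. -/
lemma card_le_of_separated {P : Finset ℝ} {N c s : ℝ} (hN : 0 < N) (hs : 0 ≤ s)
    (hsep : (P : Set ℝ).Pairwise fun x y => 1 / N ≤ |x - y|) (hP : ∀ x ∈ P, |x - c| ≤ s) :
    (#P : ℝ) ≤ 2 * s * N + 1 := by
  have hcard : #P ≤ #(Finset.range (⌊2 * s * N⌋₊ + 1)) := by
    refine Finset.card_le_card_of_injOn (fun x => ⌊(x - (c - s)) * N⌋₊) ?_ ?_
    · intro x hx
      have := abs_le.1 (hP x hx)
      simp only [Finset.coe_range, Set.mem_Iio, Nat.lt_succ_iff]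
      apply Nat.floor_mono
      gcongr
      linarith
    · intro x hx y hy hxy
      by_contra hne
      have h : 1 / N ≤ |x - y| := hsep hx hy hne
      have hx' := abs_le.1 (hP x hx)
      have hy' := abs_le.1 (hP y hy)
      have h1 := Nat.floor_le (a := (x - (c - s)) * N) (mul_nonneg (by linarith) hN.le)
      have h2 := Nat.floor_le (a := (y - (c - s)) * N) (mul_nonneg (by linarith) hN.le)
      have h3 := Nat.lt_floor_add_one ((x - (c - s)) * N)
      have h4 := Nat.lt_floor_add_one ((y - (c - s)) * N)
      simp only at hxy
      rw [hxy] at h1 h3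
      have h5 : |(x - y) * N| < 1 := by
        rw [abs_lt]
        constructor <;> linarith
      rw [abs_mul, abs_of_pos hN] at h5
      rw [div_le_iff₀ hN] at h
      linarith
  rw [Finset.card_range] at hcard
  calc (#P : ℝ) ≤ ((⌊2 * s * N⌋₊ + 1 : ℕ) : ℝ) := by exact_mod_cast hcard
    _ ≤ 2 * s * N + 1 := by
      push_cast
      gcongr
      exact Nat.floor_le (by positivity)

/-- A positive integer at most `B / 2` has a multiple in `[2B/3, B]`. -/
lemma exists_multiple_mem {B : ℝ} {n : ℕ} (hn : 0 < n) (hnB : (n : ℝ) ≤ B / 2) :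
    ∃ k : ℕ, 0 < k ∧ 2 / 3 * B ≤ (k * n : ℕ) ∧ ((k * n : ℕ) : ℝ) ≤ B := by
  have hn' : (0 : ℝ) < n := by exact_mod_cast hn
  by_cases h : (n : ℝ) ≤ B / 3
  · have h1 := Nat.floor_le (a := B / n) (div_nonneg (by linarith) hn'.le)
    have h2 := Nat.lt_floor_add_one (B / n)
    rw [le_div_iff₀ hn'] at h1
    rw [div_lt_iff₀ hn'] at h2
    refine ⟨⌊B / n⌋₊, Nat.floor_pos.2 ?_, ?_, ?_⟩
    · rw [le_div_iff₀ hn']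
      linarith
    · push_cast
      linarith
    · push_cast
      linarith
  · exact ⟨2, two_pos, by push_cast; linarith, by push_cast; linarith⟩

/-- The points of the ball of radius `σ` about `c` lying within `1 / (n (N + 1))` of a fraction with
a denominator `n ≤ N / 8` have small measure. -/
lemma volume_near_small_denominators_le {c σ : ℝ} (hσ : 0 < σ) {N : ℕ} (hN : 0 < N)
    (hharm : (N : ℝ)⁻¹ * ∑ i ∈ Finset.range N, 1 / ((i : ℝ) + 1) ≤ σ / 12) :
    volume.real {α : ℝ | |α - c| ≤ σ ∧ ∃ n : ℕ, 0 < n ∧ 8 * n ≤ N ∧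
      |n * α - round (n * α)| ≤ 1 / ((N : ℝ) + 1)} ≤ σ := by
  set T := Finset.range (N / 8) with hT
  let Z : ℕ → Finset ℤ := fun i =>
    Finset.Icc ⌈((i : ℝ) + 1) * (c - σ) - 1⌉ ⌊((i : ℝ) + 1) * (c + σ) + 1⌋
  have hN' : (0 : ℝ) < N := by exact_mod_cast hN
  have hsub : {α : ℝ | |α - c| ≤ σ ∧ ∃ n : ℕ, 0 < n ∧ 8 * n ≤ N ∧
      |n * α - round (n * α)| ≤ 1 / ((N : ℝ) + 1)} ⊆
      ⋃ i ∈ T, ⋃ p ∈ Z i,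
        Metric.closedBall ((p : ℝ) / ((i : ℝ) + 1)) (1 / (((i : ℝ) + 1) * (N + 1))) := by
    rintro α ⟨hα, n, hn, hnN, h⟩
    obtain ⟨i, rfl⟩ : ∃ i, n = i + 1 := ⟨n - 1, by omega⟩
    push_cast at h
    have hi : (0 : ℝ) < (i : ℝ) + 1 := by positivity
    have hle : 1 / ((N : ℝ) + 1) ≤ 1 := by
      rw [div_le_one (by positivity)]
      linarith
    have h' := abs_le.1 (h.trans hle)
    have hα' := abs_le.1 hα
    simp only [Set.mem_iUnion, exists_prop]
    refine ⟨i, by simp only [hT, Finset.mem_range]; omega, round (((i : ℝ) + 1) * α), ?_, ?_⟩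
    · simp only [Z, Finset.mem_Icc, Int.ceil_le, Int.le_floor]
      constructor <;> nlinarith
    · rw [Metric.mem_closedBall, Real.dist_eq]
      have : α - (round (((i : ℝ) + 1) * α) : ℝ) / ((i : ℝ) + 1) =
          (((i : ℝ) + 1) * α - round (((i : ℝ) + 1) * α)) / ((i : ℝ) + 1) := by field_simp
      rw [this, abs_div, abs_of_pos hi, div_le_iff₀ hi]
      have h1 : 1 / (((i : ℝ) + 1) * (N + 1)) * ((i : ℝ) + 1) = 1 / (N + 1) := by field_simp
      rwa [h1]
  have hcard : ∀ i, (#(Z i) : ℝ) ≤ 2 * ((i : ℝ) + 1) * σ + 3 := by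
    intro i
    have hi : (0 : ℝ) < (i : ℝ) + 1 := by positivity
    simp only [Z, Int.card_Icc]
    have h1 := Int.le_ceil (((i : ℝ) + 1) * (c - σ) - 1)
    have h2 := Int.floor_le (((i : ℝ) + 1) * (c + σ) + 1)
    set u := ⌈((i : ℝ) + 1) * (c - σ) - 1⌉
    set v := ⌊((i : ℝ) + 1) * (c + σ) + 1⌋
    have h3 : (((v + 1 - u).toNat : ℤ) : ℝ) = max ((v : ℝ) + 1 - u) 0 := by
      rw [Int.toNat_eq_max]
      push_cast
      rfl
    rw [Int.cast_natCast] at h3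
    rw [h3]
    refine max_le ?_ (by positivity)
    nlinarith
  have hfin : volume (⋃ i ∈ T, ⋃ p ∈ Z i,
        Metric.closedBall ((p : ℝ) / ((i : ℝ) + 1)) (1 / (((i : ℝ) + 1) * (N + 1)))) ≠ ⊤ := by
    refine ((measure_biUnion_finset_le _ _).trans_lt (ENNReal.sum_lt_top.2 fun i _ => ?_)).ne
    exact (measure_biUnion_finset_le _ _).trans_lt
      (ENNReal.sum_lt_top.2 fun p _ => measure_closedBall_lt_top)
  have hTcard : (#T : ℝ) ≤ N / 8 := by
    rw [hT, Finset.card_range]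
    exact Nat.cast_div_le
  have hTsum : ∑ i ∈ T, 1 / ((i : ℝ) + 1) ≤ N * (σ / 12) := by
    rw [inv_mul_le_iff₀ hN'] at hharm
    refine le_trans ?_ hharm
    refine Finset.sum_le_sum_of_subset_of_nonneg ?_ fun _ _ _ => by positivity
    intro i
    simp only [hT, Finset.mem_range]
    omega
  calc _ ≤ volume.real (⋃ i ∈ T, ⋃ p ∈ Z i,
        Metric.closedBall ((p : ℝ) / ((i : ℝ) + 1)) (1 / (((i : ℝ) + 1) * (N + 1)))) :=
        measureReal_mono hsub hfin
    _ ≤ ∑ i ∈ T, ∑ p ∈ Z i, volume.real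
        (Metric.closedBall ((p : ℝ) / ((i : ℝ) + 1)) (1 / (((i : ℝ) + 1) * (N + 1)))) :=
        (measureReal_biUnion_finset_le _ _).trans
          (Finset.sum_le_sum fun i _ => measureReal_biUnion_finset_le _ _)
    _ = ∑ i ∈ T, (#(Z i) : ℝ) * (2 * (1 / (((i : ℝ) + 1) * (N + 1)))) := by
        refine Finset.sum_congr rfl fun i _ => ?_
        rw [Finset.sum_congr rfl fun p _ => Real.volume_real_closedBall (by positivity),
          Finset.sum_const, nsmul_eq_mul]
    _ ≤ ∑ i ∈ T, (2 * ((i : ℝ) + 1) * σ + 3) * (2 * (1 / (((i : ℝ) + 1) * N))) := by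
        refine Finset.sum_le_sum fun i _ => ?_
        have := hcard i
        gcongr
        linarith
    _ = ∑ i ∈ T, (4 * σ / N + 6 / N * (1 / ((i : ℝ) + 1))) := by
        refine Finset.sum_congr rfl fun i _ => ?_
        field_simp
        ring
    _ = #T * (4 * σ / N) + 6 / N * ∑ i ∈ T, 1 / ((i : ℝ) + 1) := by
        rw [Finset.sum_add_distrib, Finset.sum_const, nsmul_eq_mul, Finset.mul_sum]
    _ ≤ N / 8 * (4 * σ / N) + 6 / N * (N * (σ / 12)) := by gcongr
    _ = σ := by
        field_simp
        ring

/-- A ball of radius `2 σ` contains at least `σ B ^ 2 / 64` fractions with a denominator in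
`[2B/3, B]`, once `B` is large. -/
lemma eventually_le_card_fracsNear (c : ℝ) {σ : ℝ} (hσ : 0 < σ) :
    ∀ᶠ B : ℝ in atTop, σ * B ^ 2 / 64 ≤ #(fracsNear B c (2 * σ)) := by
  have h1 : ∀ᶠ N : ℕ in atTop,
      (N : ℝ)⁻¹ * ∑ i ∈ Finset.range N, 1 / ((i : ℝ) + 1) ≤ σ / 12 :=
    (tendsto_one_div_add_atTop_nhds_zero_nat (𝕜 := ℝ)).cesaro.eventually_le_const (by positivity)
  have h2 : Tendsto (fun B : ℝ => ⌊B / 2⌋₊) atTop atTop :=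
    tendsto_nat_floor_atTop.comp (tendsto_id.atTop_div_const two_pos)
  have h3 : ∀ᶠ B : ℝ in atTop, 32 / σ ≤ B ^ 2 :=
    (tendsto_pow_atTop two_ne_zero).eventually_ge_atTop _
  filter_upwards [h2.eventually h1, h2.eventually_gt_atTop 0, h3, eventually_gt_atTop 0]
    with B hharm hN hBσ hB
  set N := ⌊B / 2⌋₊ with hNdef
  have hNle : (N : ℝ) ≤ B / 2 := Nat.floor_le (by positivity)
  have hNlt : B / 2 < N + 1 := Nat.lt_floor_add_one _
  set bad := {α : ℝ | |α - c| ≤ σ ∧ ∃ n : ℕ, 0 < n ∧ 8 * n ≤ N ∧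
      |n * α - round (n * α)| ≤ 1 / ((N : ℝ) + 1)} with hbad
  have hbadle : volume.real bad ≤ σ := volume_near_small_denominators_le hσ hN hharm
  set P := fracsNear B c (2 * σ) with hP
  have hcover : Metric.closedBall c σ ⊆ bad ∪ ⋃ x ∈ P, Metric.closedBall x (32 / B ^ 2) := by
    intro α hα
    rw [Metric.mem_closedBall, Real.dist_eq] at hα
    obtain ⟨n, hn, hnN, h⟩ := Real.exists_nat_abs_mul_sub_round_le α hN
    by_cases h8 : 8 * n ≤ N
    · exact Or.inl ⟨hα, n, hn, h8, h⟩
    right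
    have hn' : (0 : ℝ) < n := by exact_mod_cast hn
    have hnB : B / 16 ≤ n := by
      have : ((N + 1 : ℕ) : ℝ) ≤ ((8 * n : ℕ) : ℝ) := by exact_mod_cast Nat.lt_of_not_le h8
      push_cast at this
      linarith
    obtain ⟨k, hk, hk1, hk2⟩ :=
      exists_multiple_mem hn ((Nat.cast_le.2 hnN).trans hNle : (n : ℝ) ≤ B / 2)
    have hk' : (0 : ℝ) < k := by exact_mod_cast hk
    set p := round ((n : ℝ) * α)
    have hdist : |α - (p : ℝ) / n| ≤ 32 / B ^ 2 := by
      have : α - (p : ℝ) / n = (n * α - p) / n := by field_simp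
      rw [this, abs_div, abs_of_pos hn', div_le_iff₀ hn']
      calc |n * α - p| ≤ 1 / ((N : ℝ) + 1) := h
        _ ≤ 1 / (B / 2) := by gcongr
        _ = 32 / B ^ 2 * (B / 16) := by
          field_simp
          norm_num
        _ ≤ 32 / B ^ 2 * n := by gcongr
    have hdistσ : 32 / B ^ 2 ≤ σ := by
      rw [div_le_iff₀ (by positivity)]
      rw [div_le_iff₀ hσ] at hBσ
      linarith
    simp only [Set.mem_iUnion, exists_prop]
    refine ⟨(p : ℝ) / n, (mem_fracsNear hB).2 ⟨k * n, k * p, hk1, hk2, ?_, ?_⟩, ?_⟩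
    · push_cast
      rw [mul_div_mul_left _ _ hk'.ne']
    · calc |(p : ℝ) / n - c| ≤ |(p : ℝ) / n - α| + |α - c| := abs_sub_le _ _ _
        _ ≤ σ + σ := by
          rw [abs_sub_comm]
          exact add_le_add (hdist.trans hdistσ) hα
        _ = 2 * σ := by ring
    · rwa [Metric.mem_closedBall, Real.dist_eq]
  have hUfin : volume (⋃ x ∈ P, Metric.closedBall x (32 / B ^ 2)) ≠ ⊤ :=
    ((measure_biUnion_finset_le _ _).trans_lt
      (ENNReal.sum_lt_top.2 fun p _ => measure_closedBall_lt_top)).ne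
  have hbadfin : volume bad ≠ ⊤ := by
    refine (lt_of_le_of_lt (measure_mono ?_) (measure_closedBall_lt_top (x := c) (r := σ))).ne
    intro α hα
    rw [Metric.mem_closedBall, Real.dist_eq]
    exact hα.1
  have hmain : 2 * σ ≤ σ + #P * (2 * (32 / B ^ 2)) := by
    calc 2 * σ = volume.real (Metric.closedBall c σ) := (Real.volume_real_closedBall hσ.le).symm
      _ ≤ volume.real (bad ∪ ⋃ x ∈ P, Metric.closedBall x (32 / B ^ 2)) :=
        measureReal_mono hcover (measure_union_ne_top hbadfin hUfin)
      _ ≤ volume.real bad + volume.real (⋃ x ∈ P, Metric.closedBall x (32 / B ^ 2)) :=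
        measureReal_union_le _ _
      _ ≤ σ + ∑ x ∈ P, volume.real (Metric.closedBall x (32 / B ^ 2)) :=
        add_le_add hbadle (measureReal_biUnion_finset_le _ _)
      _ = _ := by
        rw [Finset.sum_congr rfl fun p _ => Real.volume_real_closedBall (by positivity),
          Finset.sum_const, nsmul_eq_mul]
  have : σ ≤ #P * 64 / B ^ 2 := by
    have h : (#P : ℝ) * (2 * (32 / B ^ 2)) = #P * 64 / B ^ 2 := by ring
    linarith
  rw [le_div_iff₀ (by positivity)] at this
  linarith

/-- Second moment lower bound for the measure of a union: if the indicator functions of the sets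
`A j` sum to `X`, then `2 s X - s ^ 2 X ^ 2` is at most the indicator function of the union. -/
lemma two_mul_sum_sub_le_measure_biUnion {Ω ι : Type*} [MeasurableSpace Ω] {μ : Measure Ω}
    (T : Finset ι) (A : ι → Set Ω) (hA : ∀ j ∈ T, MeasurableSet (A j))
    (hfin : ∀ j ∈ T, μ (A j) ≠ ⊤) (s : ℝ) :
    2 * s * ∑ j ∈ T, μ.real (A j) - s ^ 2 * ∑ j ∈ T, ∑ k ∈ T, μ.real (A j ∩ A k) ≤
      μ.real (⋃ j ∈ T, A j) := by
  classical
  have hint : ∀ B : Set Ω, MeasurableSet B → μ B ≠ ⊤ →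
      Integrable (B.indicator (1 : Ω → ℝ)) μ := fun B hB hBf =>
    (integrable_indicator_iff hB).2 (integrableOn_const (C := (1 : ℝ)) hBf)
  have hUm : MeasurableSet (⋃ j ∈ T, A j) := Finset.measurableSet_biUnion _ hA
  have hUf : μ (⋃ j ∈ T, A j) ≠ ⊤ :=
    ((measure_biUnion_finset_le _ _).trans_lt
      (ENNReal.sum_lt_top.2 fun j hj => (hfin j hj).lt_top)).ne
  have hi1 : Integrable (fun ω => 2 * s * ∑ j ∈ T, (A j).indicator (1 : Ω → ℝ) ω) μ :=
    (integrable_finsetSum _ fun j hj => hint _ (hA j hj) (hfin j hj)).const_mul _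
  have hi2' : ∀ j ∈ T, ∀ k ∈ T, Integrable ((A j ∩ A k).indicator (1 : Ω → ℝ)) μ :=
    fun j hj k hk => hint _ ((hA j hj).inter (hA k hk))
      (measure_ne_top_of_subset Set.inter_subset_left (hfin j hj))
  have hi2 : Integrable
      (fun ω => s ^ 2 * ∑ j ∈ T, ∑ k ∈ T, (A j ∩ A k).indicator (1 : Ω → ℝ) ω) μ :=
    (integrable_finsetSum _ fun j hj =>
      integrable_finsetSum _ fun k hk => hi2' j hj k hk).const_mul _
  calc _ = ∫ ω, (2 * s * ∑ j ∈ T, (A j).indicator (1 : Ω → ℝ) ω -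
        s ^ 2 * ∑ j ∈ T, ∑ k ∈ T, (A j ∩ A k).indicator (1 : Ω → ℝ) ω) ∂μ := by
        rw [integral_sub hi1 hi2, integral_const_mul, integral_const_mul,
          integral_finsetSum _ fun j hj => hint _ (hA j hj) (hfin j hj),
          integral_finsetSum _ fun j hj => integrable_finsetSum _ fun k hk => hi2' j hj k hk]
        congr 2
        · exact Finset.sum_congr rfl fun j hj => (integral_indicator_one (hA j hj)).symm
        · refine Finset.sum_congr rfl fun j hj => ?_
          rw [integral_finsetSum _ fun k hk => hi2' j hj k hk]
          exact Finset.sum_congr rfl fun k hk =>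
            (integral_indicator_one ((hA j hj).inter (hA k hk))).symm
    _ ≤ ∫ ω, (⋃ j ∈ T, A j).indicator (1 : Ω → ℝ) ω ∂μ := by
        refine integral_mono (hi1.sub hi2) (hint _ hUm hUf) fun ω => ?_
        have hsq : ∑ j ∈ T, ∑ k ∈ T, (A j ∩ A k).indicator (1 : Ω → ℝ) ω =
            (∑ j ∈ T, (A j).indicator (1 : Ω → ℝ) ω) ^ 2 := by
          rw [sq, Finset.sum_mul_sum]
          simp [Set.inter_indicator_one]
        simp only [hsq]
        by_cases hω : ω ∈ ⋃ j ∈ T, A j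
        · rw [Set.indicator_of_mem hω, Pi.one_apply]
          nlinarith [sq_nonneg (s * ∑ j ∈ T, (A j).indicator (1 : Ω → ℝ) ω - 1)]
        · rw [Set.indicator_of_notMem hω]
          have : ∑ j ∈ T, (A j).indicator (1 : Ω → ℝ) ω = 0 := by
            refine Finset.sum_eq_zero fun j hj => Set.indicator_of_notMem (fun h => hω ?_) _
            exact Set.mem_biUnion hj h
          simp [this]
    _ = _ := integral_indicator_one hUm

/-- The union of the closed balls of radius `r` about the points of `P`. -/
def ballUnion (P : Finset ℝ) (r : ℝ) : Set ℝ := ⋃ x ∈ P, Metric.closedBall x r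

lemma measurableSet_ballUnion (P : Finset ℝ) (r : ℝ) : MeasurableSet (ballUnion P r) :=
  Finset.measurableSet_biUnion _ fun _ _ => Metric.isClosed_closedBall.measurableSet

lemma volume_ballUnion_ne_top (P : Finset ℝ) (r : ℝ) : volume (ballUnion P r) ≠ ⊤ :=
  ((measure_biUnion_finset_le _ _).trans_lt
    (ENNReal.sum_lt_top.2 fun _ _ => measure_closedBall_lt_top)).ne

lemma volume_ballUnion_eq {P : Finset ℝ} {N r : ℝ} (hr : 0 ≤ r)
    (hsep : (P : Set ℝ).Pairwise fun x y => 1 / N ≤ |x - y|) (hrN : 2 * r < 1 / N) :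
    volume.real (ballUnion P r) = #P * (2 * r) := by
  rw [ballUnion, measureReal_biUnion_finset (h := fun _ _ => measure_closedBall_lt_top.ne)]
  · rw [Finset.sum_congr rfl fun p _ => Real.volume_real_closedBall hr,
      Finset.sum_const, nsmul_eq_mul]
  · intro x hx y hy hxy
    refine Metric.closedBall_disjoint_closedBall ?_
    rw [Real.dist_eq]
    linarith [hsep hx hy hxy]
  · exact fun _ _ => Metric.isClosed_closedBall.measurableSet

lemma volume_ballUnion_inter_le {P Q : Finset ℝ} {N r r' : ℝ} (hN : 0 < N) (hr : 0 ≤ r)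
    (hr' : 0 ≤ r') (hsep : (Q : Set ℝ).Pairwise fun x y => 1 / N ≤ |x - y|) :
    volume.real (ballUnion P r ∩ ballUnion Q r') ≤
      #P * ((2 * (r + r') * N + 1) * (2 * min r r')) := by
  classical
  have hmin : 0 ≤ min r r' := le_min hr hr'
  let D : ℝ → Finset ℝ := fun x => Q.filter fun y => |y - x| ≤ r + r'
  let I : ℝ → ℝ → Set ℝ := fun x y => Metric.closedBall x r ∩ Metric.closedBall y r'
  have hI : ∀ x y, volume.real (I x y) ≤ 2 * min r r' := by
    intro x y
    rcases le_total r r' with h | h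
    · rw [min_eq_left h, ← Real.volume_real_closedBall (a := x) hr]
      exact measureReal_mono Set.inter_subset_left measure_closedBall_lt_top.ne
    · rw [min_eq_right h, ← Real.volume_real_closedBall (a := y) hr']
      exact measureReal_mono Set.inter_subset_right measure_closedBall_lt_top.ne
  have hsub : ballUnion P r ∩ ballUnion Q r' ⊆ ⋃ x ∈ P, ⋃ y ∈ D x, I x y := by
    rintro α ⟨h1, h2⟩
    simp only [ballUnion, Set.mem_iUnion, exists_prop] at h1 h2 ⊢
    obtain ⟨x, hx, hαx⟩ := h1
    obtain ⟨y, hy, hαy⟩ := h2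
    refine ⟨x, hx, y, Finset.mem_filter.2 ⟨hy, ?_⟩, hαx, hαy⟩
    rw [Metric.mem_closedBall, Real.dist_eq] at hαx hαy
    have := abs_sub_le y α x
    rw [abs_sub_comm y α] at this
    linarith
  have hfin : volume (⋃ x ∈ P, ⋃ y ∈ D x, I x y) ≠ ⊤ := by
    refine ((measure_biUnion_finset_le _ _).trans_lt (ENNReal.sum_lt_top.2 fun x _ => ?_)).ne
    exact (measure_biUnion_finset_le _ _).trans_lt (ENNReal.sum_lt_top.2 fun y _ =>
      (measure_mono Set.inter_subset_left).trans_lt measure_closedBall_lt_top)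
  calc _ ≤ volume.real (⋃ x ∈ P, ⋃ y ∈ D x, I x y) := measureReal_mono hsub hfin
    _ ≤ ∑ x ∈ P, ∑ y ∈ D x, volume.real (I x y) :=
      (measureReal_biUnion_finset_le _ _).trans
        (Finset.sum_le_sum fun i _ => measureReal_biUnion_finset_le _ _)
    _ ≤ ∑ x ∈ P, (#(D x) : ℝ) * (2 * min r r') := by
      refine Finset.sum_le_sum fun x _ => ?_
      rw [← nsmul_eq_mul]
      exact Finset.sum_le_card_nsmul _ _ _ fun y _ => hI x y
    _ ≤ ∑ x ∈ P, (2 * (r + r') * N + 1) * (2 * min r r') := by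
      refine Finset.sum_le_sum fun x _ => ?_
      gcongr
      refine card_le_of_separated hN (by positivity) ?_ (c := x) ?_
      · exact hsep.mono (Finset.coe_subset.2 (Finset.filter_subset _ _))
      · exact fun y hy => (Finset.mem_filter.1 hy).2
    _ = _ := by rw [Finset.sum_const, nsmul_eq_mul]

lemma sum_half_pow_dist_le (T : Finset ℕ) (j : ℕ) :
    ∑ k ∈ T, (1 / 2 : ℝ) ^ (Nat.dist j k) ≤ 4 := by
  have hgeom : ∀ S : Finset ℕ, ∑ i ∈ S, (1 / 2 : ℝ) ^ i ≤ 2 := fun S => by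
    exact (summable_geometric_two.sum_le_tsum S fun _ _ => by positivity).trans_eq
      tsum_geometric_two
  have hpart : ∀ S : Finset ℕ, Set.InjOn (fun k => Nat.dist j k) S →
      ∑ k ∈ S, (1 / 2 : ℝ) ^ (Nat.dist j k) ≤ 2 := fun S hS => by
    rw [← Finset.sum_image (f := fun i => (1 / 2 : ℝ) ^ i) hS]
    exact hgeom _
  rw [← Finset.sum_filter_add_sum_filter_not T fun k => j ≤ k]
  have h1 := hpart (T.filter fun k => j ≤ k) (by
    intro a ha b hb hab
    simp only [Finset.coe_filter, Set.mem_ofPred_eq] at ha hb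
    simp only [Nat.dist] at hab
    omega)
  have h2 := hpart (T.filter fun k => ¬ j ≤ k) (by
    intro a ha b hb hab
    simp only [Finset.coe_filter, Set.mem_ofPred_eq] at ha hb
    simp only [Nat.dist] at hab
    omega)
  linarith

/-- If the measures of the sets `A j` are comparable to `σ l j`, the series of the `l j` diverges,
and the `A j` are quasi-independent up to an off-diagonal term with geometric decay, then every tail
union of the `A j` has measure at least a fixed multiple of `σ`. -/
lemma le_volume_iUnion_of_quasi_independent {A : ℕ → Set ℝ} {l : ℕ → ℝ} {σ : ℝ} {m : ℕ}
    (hσ : 0 < σ) (hA : ∀ j, MeasurableSet (A j)) (hfin : ∀ j, volume (A j) ≠ ⊤)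
    (hl : ∀ j, 0 < l j) (hdiv : ¬ Summable l)
    (hlow : ∀ j, m ≤ j → σ * l j / 32 ≤ volume.real (A j))
    (hup : ∀ j k, m ≤ j → j ≤ k → volume.real (A j ∩ A k) ≤
      40 * σ * (l j * l k) + 10 * σ * (l j * (1 / 2) ^ (k - j))) :
    ENNReal.ofReal (σ / 122880) ≤ volume (⋃ j ∈ Set.Ici m, A j) := by
  have hsym : ∀ j k, m ≤ j → m ≤ k → volume.real (A j ∩ A k) ≤
      40 * σ * (l j * l k) +
        10 * σ * (l j * (1 / 2) ^ (Nat.dist j k) + l k * (1 / 2) ^ (Nat.dist k j)) := by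
    have key : ∀ j k, m ≤ j → j ≤ k → volume.real (A j ∩ A k) ≤
      40 * σ * (l j * l k) +
        10 * σ * (l j * (1 / 2) ^ (Nat.dist j k) + l k * (1 / 2) ^ (Nat.dist k j)) := by
      intro j k hj hjk
      refine (hup j k hj hjk).trans ?_
      rw [Nat.dist_eq_sub_of_le hjk]
      have := hl k
      have h : 0 ≤ l k * (1 / 2) ^ (Nat.dist k j) := by positivity
      gcongr
      linarith
    intro j k hj hk
    rcases le_total j k with h | h
    · exact key j k hj h
    · have := key k j hk h
      rw [Set.inter_comm]
      linarith
  obtain ⟨n, hn⟩ : ∃ n, 1 ≤ ∑ j ∈ Finset.Ico m n, l j := by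
    have ht := (not_summable_iff_tendsto_nat_atTop_of_nonneg fun j => (hl j).le).1 hdiv
    obtain ⟨n, hn, hmn⟩ := ((ht.eventually_ge_atTop (∑ j ∈ Finset.range m, l j + 1)).and
      (eventually_ge_atTop m)).exists
    refine ⟨n, ?_⟩
    rw [Finset.sum_Ico_eq_sub _ hmn]
    linarith
  set T := Finset.Ico m n
  set S := ∑ j ∈ T, l j with hS
  have hTm : ∀ j ∈ T, m ≤ j := fun j hj => (Finset.mem_Ico.1 hj).1
  have hsum1 : σ / 32 * S ≤ ∑ j ∈ T, volume.real (A j) := by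
    rw [hS, Finset.mul_sum]
    refine Finset.sum_le_sum fun j hj => ?_
    linarith [hlow j (hTm j hj)]
  have hdecay : ∑ j ∈ T, ∑ k ∈ T, l j * (1 / 2 : ℝ) ^ (Nat.dist j k) ≤ 4 * S := by
    rw [hS, Finset.mul_sum]
    refine Finset.sum_le_sum fun j _ => ?_
    rw [← Finset.mul_sum]
    have := hl j
    have := mul_le_mul_of_nonneg_left (sum_half_pow_dist_le T j) this.le
    linarith
  have hsum2 : ∑ j ∈ T, ∑ k ∈ T, volume.real (A j ∩ A k) ≤ 120 * σ * S ^ 2 := by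
    calc _ ≤ ∑ j ∈ T, ∑ k ∈ T, (40 * σ * (l j * l k) +
        10 * σ * (l j * (1 / 2) ^ (Nat.dist j k) + l k * (1 / 2) ^ (Nat.dist k j))) :=
          Finset.sum_le_sum fun j hj => Finset.sum_le_sum fun k hk =>
            hsym j k (hTm j hj) (hTm k hk)
      _ = 40 * σ * S ^ 2 + 10 * σ * (∑ j ∈ T, ∑ k ∈ T, l j * (1 / 2) ^ (Nat.dist j k) +
          ∑ j ∈ T, ∑ k ∈ T, l j * (1 / 2) ^ (Nat.dist j k)) := by
        have hcomm : ∑ j ∈ T, ∑ k ∈ T, l k * (1 / 2 : ℝ) ^ (Nat.dist k j) =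
          ∑ j ∈ T, ∑ k ∈ T, l j * (1 / 2 : ℝ) ^ (Nat.dist j k) := Finset.sum_comm
        simp only [Finset.sum_add_distrib, ← Finset.mul_sum]
        rw [hS, sq, Finset.sum_mul_sum]
        simp only [Finset.mul_sum]
        rw [hcomm]
      _ ≤ 40 * σ * S ^ 2 + 10 * σ * (4 * S + 4 * S) := by gcongr
      _ ≤ 120 * σ * S ^ 2 := by nlinarith [mul_nonneg hσ.le (sub_nonneg.2 hn)]
  have hSpos : 0 < S := by linarith
  have hU := two_mul_sum_sub_le_measure_biUnion (μ := volume) T A (fun j _ => hA j)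
    (fun j _ => hfin j) (1 / (3840 * S))
  have hreal : σ / 122880 ≤ volume.real (⋃ j ∈ T, A j) := by
    refine le_trans ?_ hU
    calc σ / 122880 = 2 * (1 / (3840 * S)) * (σ / 32 * S) -
          (1 / (3840 * S)) ^ 2 * (120 * σ * S ^ 2) := by
          field_simp
          norm_num
      _ ≤ _ := by gcongr
  calc ENNReal.ofReal (σ / 122880) ≤ volume (⋃ j ∈ T, A j) :=
        ENNReal.ofReal_le_of_le_toReal hreal
    _ ≤ _ := measure_mono (Set.biUnion_subset_biUnion_left fun j hj => hTm j hj)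

/-- The reals within `r` of a fraction with a denominator in `[2B/3, B]`. -/
def nearFracs (B r : ℝ) : Set ℝ :=
  {α | ∃ (n : ℕ) (p : ℤ), 2 / 3 * B ≤ n ∧ (n : ℝ) ≤ B ∧ |α - p / n| ≤ r}

lemma measurableSet_nearFracs (B r : ℝ) : MeasurableSet (nearFracs B r) := by
  have : nearFracs B r = ⋃ (n : ℕ) (p : ℤ) (_ : 2 / 3 * B ≤ n) (_ : (n : ℝ) ≤ B),
      Metric.closedBall ((p : ℝ) / n) r := by
    ext α
    simp only [nearFracs, Set.mem_ofPred_eq, Set.mem_iUnion, Metric.mem_closedBall, Real.dist_eq,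
      exists_prop]
  rw [this]
  exact MeasurableSet.iUnion fun n => MeasurableSet.iUnion fun p => MeasurableSet.iUnion fun _ =>
    MeasurableSet.iUnion fun _ => Metric.isClosed_closedBall.measurableSet

lemma ballUnion_fracsNear_subset {B c ρ r : ℝ} (hB : 0 < B) :
    ballUnion (fracsNear B c ρ) r ⊆ nearFracs B r ∩ Metric.closedBall c (ρ + r) := by
  intro α hα
  simp only [ballUnion, Set.mem_iUnion, exists_prop] at hα
  obtain ⟨x, hx, hαx⟩ := hα
  obtain ⟨n, p, h1, h2, rfl, h3⟩ := (mem_fracsNear hB).1 hx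
  rw [Metric.mem_closedBall, Real.dist_eq] at hαx
  refine ⟨⟨n, p, h1, h2, hαx⟩, ?_⟩
  rw [Metric.mem_closedBall, Real.dist_eq]
  linarith [abs_sub_le α ((p : ℝ) / n) c]

/-- Every tail union of the sets `nearFracs (B j) (r j)` occupies at least a fixed proportion of
each ball. -/
lemma le_volume_iUnion_nearFracs {B r : ℕ → ℝ} (hB : ∀ j, 0 < B j) (hr : ∀ j, 0 < r j)
    (hBtop : Tendsto B atTop atTop) (hlt : ∀ j, B j ^ 2 * r j < 1 / 2)
    (hdiv : ¬ Summable fun j => B j ^ 2 * r j)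
    (hreg : ∀ j k, j ≤ k → B j ^ 2 * r k * (B k ^ 2 * r k) ≤
      (B j ^ 2 * r j * (1 / 2) ^ (k - j)) ^ 2)
    (c : ℝ) {σ : ℝ} (hσ : 0 < σ) (m : ℕ) :
    ENNReal.ofReal (σ / 122880) ≤
      volume ((⋃ j ∈ Set.Ici m, nearFracs (B j) (r j)) ∩ Metric.closedBall c (3 * σ)) := by
  have hlarge : ∀ᶠ x : ℝ in atTop, 1 / σ ≤ x ^ 2 :=
    (tendsto_pow_atTop two_ne_zero).eventually_ge_atTop _
  obtain ⟨m₀, hm₀⟩ := eventually_atTop.1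
    (hBtop.eventually ((eventually_le_card_fracsNear c hσ).and hlarge))
  let P : ℕ → Finset ℝ := fun j => fracsNear (B j) c (2 * σ)
  have hsq : ∀ j, 0 < B j ^ 2 := fun j => pow_pos (hB j) 2
  have hPsep : ∀ j, (P j : Set ℝ).Pairwise fun x y => 1 / B j ^ 2 ≤ |x - y| :=
    fun j => fracsNear_separated (hB j)
  have hPcard : ∀ j, m₀ ≤ j → (#(P j) : ℝ) ≤ 5 * σ * B j ^ 2 := by
    intro j hj
    have h1 := card_le_of_separated (c := c) (s := 2 * σ) (hsq j) (by positivity) (hPsep j)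
      (fun x hx => by
        obtain ⟨n, p, -, -, -, h⟩ := (mem_fracsNear (hB j)).1 hx
        exact h)
    have h2 := (hm₀ j hj).2
    rw [div_le_iff₀ hσ] at h2
    linarith
  have hsubset : ∀ j, m₀ ≤ j → ballUnion (P j) (r j) ⊆
      nearFracs (B j) (r j) ∩ Metric.closedBall c (3 * σ) := by
    intro j hj
    refine (ballUnion_fracsNear_subset (hB j)).trans
      (Set.inter_subset_inter_right _ (Metric.closedBall_subset_closedBall ?_))
    have h2 := (hm₀ j hj).2
    rw [div_le_iff₀ hσ] at h2
    have h3 := hlt j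
    have : B j ^ 2 * r j ≤ B j ^ 2 * σ := by linarith
    linarith [le_of_mul_le_mul_left this (hsq j)]
  have hmain := le_volume_iUnion_of_quasi_independent (m := max m m₀)
    (A := fun j => ballUnion (P j) (r j)) (l := fun j => B j ^ 2 * r j) hσ
    (fun j => measurableSet_ballUnion _ _) (fun j => volume_ballUnion_ne_top _ _)
    (fun j => mul_pos (hsq j) (hr j)) hdiv ?_ ?_
  · refine hmain.trans (measure_mono ?_)
    intro α hα
    simp only [Set.mem_iUnion, exists_prop, Set.mem_Ici, max_le_iff] at hα
    obtain ⟨j, ⟨hjm, hjm₀⟩, hj⟩ := hα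
    obtain ⟨h1, h2⟩ := hsubset j hjm₀ hj
    exact ⟨Set.mem_biUnion (Set.mem_Ici.2 hjm) h1, h2⟩
  · intro j hj
    have hj₀ : m₀ ≤ j := (le_max_right _ _).trans hj
    have h1 : σ * B j ^ 2 / 64 ≤ #(P j) := (hm₀ j hj₀).1
    have h2 : 2 * r j < 1 / B j ^ 2 := by
      rw [lt_div_iff₀ (hsq j)]
      linarith [hlt j]
    rw [volume_ballUnion_eq (hr j).le (hPsep j) h2]
    have := mul_le_mul_of_nonneg_right h1 (by linarith [hr j] : 0 ≤ 2 * r j)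
    linarith
  · intro j k hj hjk
    have hj₀ : m₀ ≤ j := (le_max_right _ _).trans hj
    have hcj := hPcard j hj₀
    have hck := hPcard k (hj₀.trans hjk)
    have hrj := hr j
    have hrk := hr k
    have hmin : 0 < min (r j) (r k) := lt_min hrj hrk
    have hprod : (r j + r k) * min (r j) (r k) ≤ 2 * (r j * r k) := by
      rw [← min_mul_max (r j) (r k)]
      nlinarith [le_max_left (r j) (r k), le_max_right (r j) (r k)]
    have hNj := hsq j
    have hNk := hsq k
    set N := B j ^ 2
    set M := B k ^ 2
    have hNM : N * M * ((r j + r k) * min (r j) (r k)) ≤ N * M * (2 * (r j * r k)) := by gcongr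
    have hb1 : volume.real (ballUnion (P j) (r j) ∩ ballUnion (P k) (r k)) ≤
        40 * σ * (N * r j * (M * r k)) + 10 * σ * (N * r k) := by
      calc _ ≤ #(P j) * ((2 * (r j + r k) * M + 1) * (2 * min (r j) (r k))) :=
            volume_ballUnion_inter_le hNk hrj.le hrk.le (hPsep k)
        _ ≤ 5 * σ * N * ((2 * (r j + r k) * M + 1) * (2 * min (r j) (r k))) := by gcongr
        _ = 20 * σ * (N * M * ((r j + r k) * min (r j) (r k))) +
            10 * σ * (N * min (r j) (r k)) := by ring
        _ ≤ 20 * σ * (N * M * (2 * (r j * r k))) + 10 * σ * (N * r k) := by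
            gcongr
            exact min_le_right _ _
        _ = _ := by ring
    have hb2 : volume.real (ballUnion (P j) (r j) ∩ ballUnion (P k) (r k)) ≤
        40 * σ * (N * r j * (M * r k)) + 10 * σ * (M * r k) := by
      rw [Set.inter_comm]
      calc _ ≤ #(P k) * ((2 * (r k + r j) * N + 1) * (2 * min (r k) (r j))) :=
            volume_ballUnion_inter_le hNj hrk.le hrj.le (hPsep j)
        _ = #(P k) * ((2 * (r j + r k) * N + 1) * (2 * min (r j) (r k))) := by
            rw [min_comm, add_comm (r k)]
        _ ≤ 5 * σ * M * ((2 * (r j + r k) * N + 1) * (2 * min (r j) (r k))) := by gcongr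
        _ = 20 * σ * (N * M * ((r j + r k) * min (r j) (r k))) +
            10 * σ * (M * min (r j) (r k)) := by ring
        _ ≤ 20 * σ * (N * M * (2 * (r j * r k))) + 10 * σ * (M * r k) := by
            gcongr
            exact min_le_right _ _
        _ = _ := by ring
    have hdecay : min (N * r k) (M * r k) ≤ N * r j * (1 / 2) ^ (k - j) := by
      refine (sq_le_sq₀ (by positivity) (by positivity)).1 (le_trans ?_ (hreg j k hjk))
      rw [sq]
      exact mul_le_mul (min_le_left _ _) (min_le_right _ _) (by positivity) (by positivity)
    calc _ ≤ 40 * σ * (N * r j * (M * r k)) + 10 * σ * min (N * r k) (M * r k) := by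
          rcases min_choice (N * r k) (M * r k) with h | h <;> rw [h] <;> assumption
      _ ≤ _ := by gcongr

/-- A measurable set of reals occupying at least a fixed positive proportion of every ball has null
complement. -/
lemma volume_compl_eq_zero_of_forall_le {V : Set ℝ} (hV : MeasurableSet V) {κ : ℝ} (hκ : 0 < κ)
    (h : ∀ c σ : ℝ, 0 < σ → ENNReal.ofReal (κ * σ) ≤ volume (V ∩ Metric.closedBall c σ)) :
    volume Vᶜ = 0 := by
  have hae := Besicovitch.ae_tendsto_measure_inter_div_of_measurableSet (volume : Measure ℝ) hV
  rw [measure_eq_zero_iff_ae_notMem]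
  filter_upwards [hae] with x hx hxV
  rw [Set.indicator_of_notMem hxV] at hx
  have hlow : ∀ᶠ s : ℝ in nhdsWithin 0 (Set.Ioi 0), ENNReal.ofReal (κ / 2) ≤
      volume (V ∩ Metric.closedBall x s) / volume (Metric.closedBall x s) := by
    filter_upwards [self_mem_nhdsWithin] with s hs
    have hs' : 0 < s := hs
    rw [Real.volume_closedBall, ENNReal.le_div_iff_mul_le (Or.inl (by simpa using hs'))
      (Or.inl ENNReal.ofReal_ne_top), ← ENNReal.ofReal_mul (by positivity)]
    convert h x s hs' using 2
    ring
  have := ge_of_tendsto hx hlow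
  simp only [nonpos_iff_eq_zero, ENNReal.ofReal_eq_zero] at this
  linarith

lemma volume_compl_limsup_nearFracs {B r : ℕ → ℝ} (hB : ∀ j, 0 < B j) (hr : ∀ j, 0 < r j)
    (hBtop : Tendsto B atTop atTop) (hlt : ∀ j, B j ^ 2 * r j < 1 / 2)
    (hdiv : ¬ Summable fun j => B j ^ 2 * r j)
    (hreg : ∀ j k, j ≤ k → B j ^ 2 * r k * (B k ^ 2 * r k) ≤
      (B j ^ 2 * r j * (1 / 2) ^ (k - j)) ^ 2) :
    volume (⋂ m : ℕ, ⋃ j ∈ Set.Ici m, nearFracs (B j) (r j))ᶜ = 0 := by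
  have hmeas : ∀ m : ℕ, MeasurableSet (⋃ j ∈ Set.Ici m, nearFracs (B j) (r j)) := fun m =>
    MeasurableSet.biUnion (Set.to_countable _) fun j _ => measurableSet_nearFracs _ _
  refine volume_compl_eq_zero_of_forall_le (MeasurableSet.iInter hmeas)
    (κ := 1 / 368640) (by norm_num) fun c σ hσ => ?_
  rw [Set.iInter_inter]
  refine ge_of_tendsto' (tendsto_measure_iInter_atTop
    (fun m => ((hmeas m).inter Metric.isClosed_closedBall.measurableSet).nullMeasurableSet) ?_
    ⟨0, measure_ne_top_of_subset Set.inter_subset_right measure_closedBall_lt_top.ne⟩) fun m => ?_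
  · intro a b hab
    exact Set.inter_subset_inter_left _
      (Set.biUnion_subset_biUnion_left (Set.Ici_subset_Ici.2 hab))
  · have := le_volume_iUnion_nearFracs hB hr hBtop hlt hdiv hreg c (σ := σ / 3) (by positivity) m
    rw [mul_div_cancel₀ σ three_ne_zero, div_div] at this
    refine le_trans (le_of_eq ?_) this
    congr 1
    ring

lemma tendsto_Bbig_atTop {f ϑ : ℝ → ℝ} (hf_gt : ∀ x : ℝ, 0 < x → 2 < f x)
    (hf_O : ∃ C : ℝ, 0 < C ∧ ∀ᶠ x : ℝ in atTop,
      f x ≤ C * x ^ ((1 : ℝ) / 3) / (Real.log x) ^ ((7 : ℝ) / 3))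
    (hϑ_gt : ∀ x : ℝ, 0 < x → 1 < ϑ x)
    (hϑ_O : ∃ C : ℝ, 0 < C ∧ ∀ᶠ x : ℝ in atTop, ϑ x ≤ C * x ^ ((1 : ℝ) / 4)) :
    Tendsto (Bbig f ϑ) atTop atTop := by
  obtain ⟨C, hC, hf⟩ := hf_O
  obtain ⟨D, hD, hϑ⟩ := hϑ_O
  have hpow : Tendsto (fun j : ℕ => (2 : ℝ) ^ j) atTop atTop :=
    tendsto_pow_atTop_atTop_of_one_lt one_lt_two
  have hx : ∀ᶠ x : ℝ in atTop,
      x ^ ((5 : ℝ) / 12) / (C * D) ≤ x / (f x * Real.sqrt (ϑ x)) := by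
    filter_upwards [hf, hϑ, Real.tendsto_log_atTop.eventually_ge_atTop 1, eventually_gt_atTop 0]
      with x h1 h2 h3 hx
    have hfx := hf_gt x hx
    have hϑx := hϑ_gt x hx
    have h4 : f x ≤ C * x ^ ((1 : ℝ) / 3) :=
      h1.trans (div_le_self (by positivity) (Real.one_le_rpow h3 (by norm_num)))
    have h5 : Real.sqrt (ϑ x) ≤ D * x ^ ((1 : ℝ) / 4) := by
      refine le_trans ?_ h2
      rw [Real.sqrt_le_left (by linarith)]
      nlinarith
    have h6 : 0 < Real.sqrt (ϑ x) := Real.sqrt_pos.2 (by linarith)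
    have h7 : x ^ ((5 : ℝ) / 12) * (x ^ ((1 : ℝ) / 3) * x ^ ((1 : ℝ) / 4)) = x := by
      rw [← Real.rpow_add hx, ← Real.rpow_add hx]
      norm_num
    rw [div_le_div_iff₀ (by positivity) (by positivity)]
    calc x ^ ((5 : ℝ) / 12) * (f x * Real.sqrt (ϑ x))
        ≤ x ^ ((5 : ℝ) / 12) * ((C * x ^ ((1 : ℝ) / 3)) * (D * x ^ ((1 : ℝ) / 4))) := by gcongr
      _ = x ^ ((5 : ℝ) / 12) * (x ^ ((1 : ℝ) / 3) * x ^ ((1 : ℝ) / 4)) * (C * D) := by ring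
      _ = x * (C * D) := by rw [h7]
  refine tendsto_atTop_mono' atTop (hpow.eventually hx) ?_
  exact ((tendsto_rpow_atTop (by norm_num)).comp hpow).atTop_div_const (by positivity)

lemma Bbig_sq_mul {f ϑ : ℝ → ℝ} (hf_gt : ∀ x : ℝ, 0 < x → 2 < f x)
    (hϑ_gt : ∀ x : ℝ, 0 < x → 1 < ϑ x) (j : ℕ) :
    Bbig f ϑ j ^ 2 * (f (2 ^ j) / 4 ^ j) = 1 / (f (2 ^ j) * ϑ (2 ^ j)) := by
  have hf := hf_gt (2 ^ j) (by positivity)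
  have hϑ := hϑ_gt (2 ^ j) (by positivity)
  have h4 : (4 : ℝ) ^ j = (2 ^ j) ^ 2 := by rw [← pow_mul, mul_comm, pow_mul]; norm_num
  rw [Bbig, div_pow, mul_pow, Real.sq_sqrt (by linarith), h4]
  field_simp

lemma not_summable_condensed {f ϑ : ℝ → ℝ} (hf_gt : ∀ x : ℝ, 0 < x → 2 < f x)
    (hf_mono : MonotoneOn f (Set.Ioi (0 : ℝ))) (hϑ_gt : ∀ x : ℝ, 0 < x → 1 < ϑ x)
    (hϑ_mono : MonotoneOn ϑ (Set.Ioi (0 : ℝ)))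
    (hdiv : ¬ Summable fun n : ℕ => 1 / ((n : ℝ) * f n * ϑ n)) :
    ¬ Summable fun j : ℕ => 1 / (f (2 ^ j) * ϑ (2 ^ j)) := by
  rw [← summable_condensed_iff_of_nonneg] at hdiv
  · convert hdiv using 3 with j
    push_cast
    have hf := hf_gt (2 ^ j) (by positivity)
    have hϑ := hϑ_gt (2 ^ j) (by positivity)
    field_simp
  · intro n
    rcases n.eq_zero_or_pos with rfl | hn
    · simp
    · have hn' : (0 : ℝ) < n := by exact_mod_cast hn
      have hf := hf_gt n hn'
      have hϑ := hϑ_gt n hn'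
      positivity
  · intro m n hm hmn
    have hm' : (0 : ℝ) < m := by exact_mod_cast hm
    have hmn' : (m : ℝ) ≤ n := by exact_mod_cast hmn
    have hf := hf_gt m hm'
    have hϑ := hϑ_gt m hm'
    have h1 := hf_mono hm' (hm'.trans_le hmn') hmn'
    have h2 := hϑ_mono hm' (hm'.trans_le hmn') hmn'
    have : 0 < f n := by linarith
    gcongr

theorem full_measure_of_well_approximable_set
    (f : ℝ → ℝ)
    (hf_gt : ∀ x : ℝ, 0 < x → 2 < f x)
    (hf_mono : MonotoneOn f (Set.Ioi (0 : ℝ)))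
    (hf_top : Tendsto f atTop atTop)
    (hf_O : ∃ C : ℝ, 0 < C ∧ ∀ᶠ x : ℝ in atTop,
      f x ≤ C * x ^ ((1 : ℝ) / 3) / (Real.log x) ^ ((7 : ℝ) / 3))
    (ϑ : ℝ → ℝ)
    (hϑ_gt : ∀ x : ℝ, 0 < x → 1 < ϑ x)
    (hϑ_mono : MonotoneOn ϑ (Set.Ioi (0 : ℝ)))
    (hϑ_top : Tendsto ϑ atTop atTop)
    (hϑ_O : ∃ C : ℝ, 0 < C ∧ ∀ᶠ x : ℝ in atTop, ϑ x ≤ C * x ^ ((1 : ℝ) / 4))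
    (hϑ_rat : Tendsto (fun j : ℕ => ϑ ((2 : ℝ) ^ (j + 1)) / ϑ ((2 : ℝ) ^ j)) atTop (nhds 1))
    (hdiv : ¬ Summable fun n : ℕ => 1 / ((n : ℝ) * f n * ϑ n)) :
    ∃ C : ℝ, 0 < C ∧
      volume {α : ℝ | α ∈ Set.Ioo (0 : ℝ) 1 ∧
        ∀ J : ℕ, ∃ j : ℕ, J ≤ j ∧ 1 ≤ j ∧ ∃ n : ℕ,
          bsmall f ϑ j ≤ (n : ℝ) ∧ (n : ℝ) ≤ Bbig f ϑ j ∧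
          dni ((n : ℝ) * α) ≤ C * ((2 : ℝ) ^ j)⁻¹ * (Real.sqrt (ϑ ((2 : ℝ) ^ j)))⁻¹} = 1 := by
  have hBsq := Bbig_sq_mul hf_gt hϑ_gt
  have hf : ∀ j : ℕ, 2 < f (2 ^ j) := fun j => hf_gt _ (by positivity)
  have hϑ : ∀ j : ℕ, 1 < ϑ (2 ^ j) := fun j => hϑ_gt _ (by positivity)
  have hB : ∀ j, 0 < Bbig f ϑ j := fun j => by
    have h1 := hf j
    have h2 : 0 < Real.sqrt (ϑ (2 ^ j)) := Real.sqrt_pos.2 (by linarith [hϑ j])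
    unfold Bbig
    positivity
  have hnull := volume_compl_limsup_nearFracs (B := Bbig f ϑ) (r := fun j => f (2 ^ j) / 4 ^ j) hB
    (fun j => div_pos (by linarith [hf j]) (by positivity))
    (tendsto_Bbig_atTop hf_gt hf_O hϑ_gt hϑ_O)
    (fun j => by
      rw [hBsq]
      have h1 := hf j
      have h2 := hϑ j
      gcongr
      nlinarith)
    (by
      simp only [hBsq]
      exact not_summable_condensed hf_gt hf_mono hϑ_gt hϑ_mono hdiv)
    (fun j k hjk => by
      have h1 := hf j
      have h2 := hϑ j
      have h3 := hf k
      have h4 : ϑ (2 ^ j) ≤ ϑ (2 ^ k) :=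
        hϑ_mono (Set.mem_Ioi.2 (by positivity)) (Set.mem_Ioi.2 (by positivity))
          (pow_le_pow_right₀ one_le_two hjk)
      have h5 : Bbig f ϑ j ^ 2 * (f (2 ^ k) / 4 ^ k) =
          1 / (f (2 ^ j) * ϑ (2 ^ j)) * (f (2 ^ k) / f (2 ^ j) * (4 ^ j / 4 ^ k)) := by
        rw [← hBsq]
        field_simp
      have h6 : (4 : ℝ) ^ j / 4 ^ k = ((1 / 2) ^ (k - j)) ^ 2 := by
        obtain ⟨d, rfl⟩ := Nat.exists_eq_add_of_le hjk
        rw [Nat.add_sub_cancel_left, ← pow_mul, mul_comm d, pow_mul, pow_add]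
        rw [div_mul_cancel_left₀ (by positivity)]
        norm_num [div_pow]
      rw [h5, hBsq, hBsq, h6, mul_pow]
      calc _ = 1 / (f (2 ^ j) * ϑ (2 ^ j)) * (1 / (f (2 ^ j) * ϑ (2 ^ k))) *
            ((1 / 2) ^ (k - j)) ^ 2 := by
            field_simp
        _ ≤ 1 / (f (2 ^ j) * ϑ (2 ^ j)) * (1 / (f (2 ^ j) * ϑ (2 ^ j))) *
            ((1 / 2) ^ (k - j)) ^ 2 := by gcongr
        _ = _ := by rw [sq (1 / (f (2 ^ j) * ϑ (2 ^ j)))])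
  refine ⟨1, one_pos, le_antisymm ?_ ?_⟩
  · calc _ ≤ volume (Set.Ioo (0 : ℝ) 1) := measure_mono fun α hα => hα.1
      _ = 1 := by simp
  · have hone : volume (Set.Ioo (0 : ℝ) 1) = 1 := by simp
    rw [← hone, ← measure_inter_conull hnull]
    refine measure_mono ?_
    rintro α ⟨hα, hlim⟩
    refine ⟨hα, fun J => ?_⟩
    have := Set.mem_iInter.1 hlim (max J 1)
    simp only [Set.mem_iUnion, exists_prop, Set.mem_Ici, max_le_iff] at this
    obtain ⟨j, ⟨hJj, hj⟩, n, p, hn1, hn2, hp⟩ := this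
    refine ⟨j, hJj, hj, n, hn1, hn2, ?_⟩
    have hn : (0 : ℝ) < n := by linarith [hB j]
    have h1 := hf j
    have h2 : 0 < Real.sqrt (ϑ (2 ^ j)) := Real.sqrt_pos.2 (by linarith [hϑ j])
    calc dni (n * α) ≤ |n * α - p| := round_le _ _
      _ = n * |α - p / n| := by
        rw [← abs_of_pos hn, ← abs_mul, abs_of_pos hn, mul_sub, mul_div_cancel₀ _ hn.ne']
      _ ≤ Bbig f ϑ j * (f (2 ^ j) / 4 ^ j) :=
        mul_le_mul hn2 hp (abs_nonneg _) (hB j).le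
      _ = _ := by
        have h4 : (4 : ℝ) ^ j = (2 ^ j) ^ 2 := by rw [← pow_mul, mul_comm, pow_mul]; norm_num
        rw [Bbig, h4]
        field_simp
end

section
/- Let f : ℝ_{>0} → ℝ_{>2} be a function increasing monotonically to ∞ satisfying f(x) = O((log x)^{−7/3} x^{1/3}), such that Σ_{n≥1} 1/(n f(n)) converges and sup{ f(2x)/f(x) : x ≥ x₀ } < 2 for some x₀ > 0. Set ϑ(x) := 1 + log x, and for each j ∈ ℕ set B_j := 2^j / ( f(2^j) · √(ϑ(2^j)) ) and b_j := (2/3)·B_j. Then there exists a constant C > 0 such that the set of α ∈ (0,1) for which there are infinitely many j admitting an integer n with b_j ≤ n ≤ B_j and ‖nα‖ ≤ C · 2^{−j} · (ϑ(2^j))^{−1/2} has Hausdorff dimension at least 1/(1+λ), where λ := liminf_{x→∞} log f(x)/log x is the lower order of f at infinity. -/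
open Filter MeasureTheory

open scoped ENNReal

/-- The points of a ball which are close to a rational of small denominator have small measure. -/
theorem volume_near_small_denominators_le_s14 {x R Q η : ℝ} (hR : 0 < R) (hR1 : R ≤ 1) (hQ : 1 ≤ Q)
    (hη : 0 < η) :
    volume {α ∈ Metric.closedBall x (R / 2) | ∃ a b : ℤ, 0 < b ∧ (b : ℝ) ≤ η * Q ∧
      |b * α - a| ≤ 1 / Q} ≤ ENNReal.ofReal (8 * η) := by
  have hQ0 : 0 < Q := by linarith
  have hsub : {α ∈ Metric.closedBall x (R / 2) | ∃ a b : ℤ, 0 < b ∧ (b : ℝ) ≤ η * Q ∧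
      |b * α - a| ≤ 1 / Q} ⊆ ⋃ b ∈ Finset.Icc (1 : ℤ) ⌊η * Q⌋,
      ⋃ a ∈ Finset.Icc ⌈b * x - b * R / 2 - 1⌉ ⌊b * x + b * R / 2 + 1⌋,
        Metric.closedBall ((a : ℝ) / b) (1 / (b * Q)) := by
    rintro α ⟨hα, a, b, hb, hbQ, hab⟩
    have hb' : (0 : ℝ) < b := by exact_mod_cast hb
    have h1 : 1 / Q ≤ 1 := by rw [div_le_one hQ0]; exact hQ
    rw [Metric.mem_closedBall, Real.dist_eq, abs_le] at hα
    have hab' := abs_le.1 hab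
    simp only [Set.mem_iUnion, Finset.mem_Icc, Int.ceil_le, Int.le_floor]
    refine ⟨b, ⟨hb, hbQ⟩, a, ⟨?_, ?_⟩, ?_⟩
    · nlinarith
    · nlinarith
    · rw [Metric.mem_closedBall, Real.dist_eq]
      have : α - a / b = (b * α - a) / b := by field_simp
      rw [this, abs_div, abs_of_pos hb', div_le_div_iff₀ hb' (by positivity)]
      rw [le_div_iff₀ hQ0] at hab
      nlinarith
  refine (measure_mono hsub).trans ?_
  refine (measure_biUnion_finset_le _ _).trans ?_
  have hb : ∀ b ∈ Finset.Icc (1 : ℤ) ⌊η * Q⌋,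
      volume (⋃ a ∈ Finset.Icc ⌈b * x - b * R / 2 - 1⌉ ⌊b * x + b * R / 2 + 1⌋,
        Metric.closedBall ((a : ℝ) / b) (1 / (b * Q))) ≤ ENNReal.ofReal (8 / Q) := by
    intro b hb
    have hb1 : (1 : ℝ) ≤ b := by exact_mod_cast (Finset.mem_Icc.1 hb).1
    refine (measure_biUnion_finset_le _ _).trans ?_
    simp only [Real.volume_closedBall, Finset.sum_const, nsmul_eq_mul, Int.card_Icc]
    rw [← ENNReal.ofReal_natCast, ← ENNReal.ofReal_mul (by positivity)]
    apply ENNReal.ofReal_le_ofReal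
    have hcard : (((⌊b * x + b * R / 2 + 1⌋ + 1 - ⌈b * x - b * R / 2 - 1⌉).toNat : ℕ) : ℝ)
        ≤ b * R + 3 := by
      rw [← Int.cast_natCast, Int.toNat_eq_max, Int.cast_max]
      push_cast
      apply max_le
      · linarith [Int.floor_le (b * x + b * R / 2 + 1), Int.le_ceil (b * x - b * R / 2 - 1)]
      · positivity
    calc _ ≤ (b * R + 3) * (2 * (1 / (b * Q))) := by gcongr
      _ ≤ (4 * b) * (2 * (1 / (b * Q))) := by gcongr; nlinarith
      _ = 8 / Q := by field_simp; norm_num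
  refine (Finset.sum_le_sum hb).trans ?_
  simp only [Finset.sum_const, nsmul_eq_mul, Int.card_Icc]
  rw [← ENNReal.ofReal_natCast, ← ENNReal.ofReal_mul (by positivity)]
  apply ENNReal.ofReal_le_ofReal
  have hcard : (((⌊η * Q⌋ + 1 - 1).toNat : ℕ) : ℝ) ≤ η * Q := by
    rw [← Int.cast_natCast, Int.toNat_eq_max, Int.cast_max]
    push_cast
    apply max_le
    · linarith [Int.floor_le (η * Q)]
    · positivity
  calc _ ≤ (η * Q) * (8 / Q) := by gcongr
    _ = 8 * η := by field_simp

theorem ENNReal.le_of_tsum_rpow_le {s : ℝ} (hs : 0 < s) {d : ℕ → ℝ≥0∞} {D : ℝ≥0∞}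
    (h : ∑' i, d i ^ s ≤ D ^ s) (i : ℕ) : d i ≤ D :=
  (ENNReal.rpow_le_rpow_iff hs).1 ((ENNReal.le_tsum i).trans h)

theorem ENNReal.tsum_le_of_tsum_rpow_le {s : ℝ} (hs : 0 < s) (hs1 : s ≤ 1) {d : ℕ → ℝ≥0∞}
    {D : ℝ≥0∞} (hD0 : D ≠ 0) (hD : D ≠ ⊤)
    (h : ∑' i, d i ^ s ≤ D ^ s) : ∑' i, d i ≤ D := by
  have key : ∀ i, d i ≤ d i ^ s * D ^ (1 - s) := by
    intro i
    have hi := ENNReal.le_of_tsum_rpow_le hs h i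
    calc d i = d i ^ (s + (1 - s)) := by simp
      _ = d i ^ s * d i ^ (1 - s) := ENNReal.rpow_add_of_nonneg _ _ hs.le (by linarith)
      _ ≤ _ := by gcongr
  calc ∑' i, d i ≤ ∑' i, d i ^ s * D ^ (1 - s) := ENNReal.tsum_le_tsum key
    _ = (∑' i, d i ^ s) * D ^ (1 - s) := ENNReal.tsum_mul_right
    _ ≤ D ^ s * D ^ (1 - s) := by gcongr
    _ = D := by rw [← ENNReal.rpow_add _ _ hD0 hD]; simp

open scoped Classical in
/-- The size `d i` assigned to the set `U i` if this set meets the closed ball of centre `x` and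
radius `R`, and `0` otherwise. -/
noncomputable def meetingSize (U : ℕ → Set ℝ) (d : ℕ → ℝ) (x R : ℝ) (i : ℕ) : ℝ≥0∞ :=
  if (U i ∩ Metric.closedBall x R).Nonempty then ENNReal.ofReal (d i) else 0

theorem exists_sub_ball_of_tsum_meetingSize_le {s : ℝ} (hs : 0 < s) (hs1 : s < 1)
    {U : ℕ → Set ℝ} {d : ℕ → ℝ}
    (hU : ∀ i, ∀ y ∈ U i, ∀ z ∈ U i, |y - z| ≤ d i)
    {x R Q r : ℝ} (hR : 0 < R) (hR1 : R ≤ 1) (hr : 0 < r) (hrR : r ≤ R / 4) (hQ : 1 ≤ Q)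
    (hrQ : r * Q ^ 2 ≤ 1) (hQR : 128 ≤ R ^ 2 * Q ^ 2)
    (hsize : 32 * (32 / R + 1) * R ^ s ≤ R * (Q ^ 2 * r ^ s))
    (hsum : ∑' i, meetingSize U d x R i ^ s ≤ ENNReal.ofReal (R / 100) ^ s) :
    ∃ a b : ℤ, 0 < b ∧ (b : ℝ) ≤ Q ∧
      Metric.closedBall ((a : ℝ) / b) r ⊆ Metric.closedBall x R ∧
      ∑' i, meetingSize U d ((a : ℝ) / b) r i ^ s ≤ ENNReal.ofReal (r / 100) ^ s := by
  classical
  have hQ0 : 0 < Q := by linarith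
  set ρ : ℝ := (32 / R + 1) / Q ^ 2 with hρ
  have hρ0 : 0 < ρ := by positivity
  obtain ⟨y, hy⟩ : ∃ y : ℕ → ℝ, ∀ i, (U i).Nonempty → y i ∈ U i := by
    have : ∀ i, ∃ y, (U i).Nonempty → y ∈ U i := fun i => by
      by_cases h : (U i).Nonempty
      · exact ⟨h.some, fun _ => h.some_mem⟩
      · exact ⟨0, fun h' => absurd h' h⟩
    choose y hy using this
    exact ⟨y, hy⟩
  set e := meetingSize U d x R with he
  -- points near a rational with small denominator
  set A₁ : Set ℝ := {α ∈ Metric.closedBall x (R / 2) | ∃ a b : ℤ, 0 < b ∧ (b : ℝ) ≤ R / 32 * Q ∧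
      |b * α - a| ≤ 1 / Q} with hA₁
  have hvol₁ : volume A₁ ≤ ENNReal.ofReal (R / 4) := by
    have := volume_near_small_denominators_le_s14 (x := x) hR hR1 hQ (η := R / 32) (by positivity)
    refine this.trans (ENNReal.ofReal_le_ofReal (by linarith))
  -- points near a large set of the family
  set W : ℕ → Set ℝ := fun i =>
    if (U i ∩ Metric.closedBall x R).Nonempty ∧ ρ ≤ d i then Metric.closedBall (y i) (2 * d i)
    else ∅ with hW
  have hvol₂ : volume (⋃ i, W i) ≤ ENNReal.ofReal (R / 25) := by
    calc volume (⋃ i, W i) ≤ ∑' i, volume (W i) := measure_iUnion_le _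
      _ ≤ ∑' i, ENNReal.ofReal 4 * e i := by
        refine ENNReal.tsum_le_tsum fun i => ?_
        simp only [hW, he, meetingSize]
        by_cases h : (U i ∩ Metric.closedBall x R).Nonempty ∧ ρ ≤ d i
        · rw [if_pos h, if_pos h.1, Real.volume_closedBall, ← ENNReal.ofReal_mul (by norm_num)]
          exact ENNReal.ofReal_le_ofReal (by linarith)
        · rw [if_neg h]; simp
      _ = ENNReal.ofReal 4 * ∑' i, e i := ENNReal.tsum_mul_left
      _ ≤ ENNReal.ofReal 4 * ENNReal.ofReal (R / 100) := by
        gcongr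
        exact ENNReal.tsum_le_of_tsum_rpow_le hs hs1.le (by simp; positivity) (by simp) hsum
      _ = ENNReal.ofReal (R / 25) := by
        rw [← ENNReal.ofReal_mul (by norm_num)]; congr 1; ring
  -- points near too many small sets of the family
  set V : ℕ → Set ℝ := fun i => if d i < ρ then Metric.closedBall (y i) (2 * ρ) else ∅ with hV
  have hVm : ∀ i, MeasurableSet (V i) := fun i => by
    simp only [hV]; split_ifs
    · exact measurableSet_closedBall
    · exact MeasurableSet.empty
  set g : ℝ → ℝ≥0∞ := fun α => ∑' i, (V i).indicator (fun _ => e i ^ s) α with hg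
  have hgm : Measurable g :=
    Measurable.tsum fun i => measurable_const.indicator (hVm i)
  set t : ℝ≥0∞ := ENNReal.ofReal (r / 100) ^ s with ht
  have ht' : t = ENNReal.ofReal ((r / 100) ^ s) :=
    ENNReal.ofReal_rpow_of_pos (by positivity)
  have ht0 : 0 < (r / 100) ^ s := by positivity
  have hint : ∫⁻ α, g α ≤ ENNReal.ofReal ((R / 100) ^ s * (4 * ρ)) := by
    rw [hg, lintegral_tsum fun i => (measurable_const.indicator (hVm i)).aemeasurable]
    calc ∑' i, ∫⁻ α, (V i).indicator (fun _ => e i ^ s) α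
        ≤ ∑' i, e i ^ s * ENNReal.ofReal (4 * ρ) := by
          refine ENNReal.tsum_le_tsum fun i => ?_
          rw [lintegral_indicator_const (hVm i)]
          gcongr
          simp only [hV]; split_ifs
          · rw [Real.volume_closedBall]; exact ENNReal.ofReal_le_ofReal (by linarith)
          · simp
      _ = (∑' i, e i ^ s) * ENNReal.ofReal (4 * ρ) := ENNReal.tsum_mul_right
      _ ≤ ENNReal.ofReal (R / 100) ^ s * ENNReal.ofReal (4 * ρ) := by gcongr
      _ = _ := by
        rw [ENNReal.ofReal_rpow_of_pos (by positivity), ← ENNReal.ofReal_mul (by positivity)]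
  have hvol₃ : volume {α | t ≤ g α} ≤ ENNReal.ofReal (R / 8) := by
    have h1 : volume {α | t ≤ g α} ≤ ENNReal.ofReal ((R / 100) ^ s * (4 * ρ)) / t := by
      rw [ENNReal.le_div_iff_mul_le (Or.inl (by rw [ht']; simpa using ht0))
        (Or.inl (by rw [ht']; simp)), mul_comm]
      exact (mul_meas_ge_le_lintegral hgm t).trans hint
    refine h1.trans ?_
    rw [ht', ← ENNReal.ofReal_div_of_pos ht0]
    apply ENNReal.ofReal_le_ofReal
    rw [div_le_iff₀ ht0, Real.div_rpow hR.le (by norm_num), Real.div_rpow hr.le (by norm_num)]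
    have h100 : (0 : ℝ) < 100 ^ s := by positivity
    have : R ^ s * (4 * ρ) ≤ R / 8 * r ^ s := by
      rw [hρ]
      rw [show R ^ s * (4 * ((32 / R + 1) / Q ^ 2)) = R ^ s * (4 * (32 / R + 1)) / Q ^ 2 by ring,
        div_le_iff₀ (by positivity)]
      linarith
    calc R ^ s / 100 ^ s * (4 * ρ) = R ^ s * (4 * ρ) / 100 ^ s := by ring
      _ ≤ R / 8 * r ^ s / 100 ^ s := by gcongr
      _ = _ := by ring
  obtain ⟨α, hαx, hα⟩ : ∃ α ∈ Metric.closedBall x (R / 2),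
      α ∉ A₁ ∪ (⋃ i, W i) ∪ {α | t ≤ g α} := by
    by_contra! hcon
    have hle : volume (Metric.closedBall x (R / 2)) ≤
        ENNReal.ofReal (R / 4) + ENNReal.ofReal (R / 25) + ENNReal.ofReal (R / 8) :=
      (measure_mono hcon).trans <| (measure_union_le _ _).trans <|
        add_le_add ((measure_union_le _ _).trans (add_le_add hvol₁ hvol₂)) hvol₃
    rw [Real.volume_closedBall, ← ENNReal.ofReal_add (by positivity) (by positivity),
      ← ENNReal.ofReal_add (by positivity) (by positivity),
      ENNReal.ofReal_le_ofReal_iff (by positivity)] at hle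
    linarith
  simp only [Set.mem_union, not_or, Set.mem_iUnion, not_exists, Set.mem_ofPred_eq, not_le] at hα
  obtain ⟨⟨hα₁, hα₂⟩, hα₃⟩ := hα
  obtain ⟨a, b, hb, hbn, hab⟩ := Real.exists_int_int_abs_mul_sub_le α (Nat.floor_pos.2 hQ)
  have hbQ : (b : ℝ) ≤ Q := by
    have : (b : ℝ) ≤ ((⌊Q⌋₊ : ℕ) : ℝ) := by exact_mod_cast hbn
    exact this.trans (Nat.floor_le hQ0.le)
  have habQ : |b * α - a| ≤ 1 / Q :=
    hab.trans (one_div_le_one_div_of_le hQ0 (Nat.lt_floor_add_one Q).le)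
  have hb0 : (0 : ℝ) < b := by exact_mod_cast hb
  have hbig : R / 32 * Q < b := by
    by_contra! hcon
    exact hα₁ ⟨hαx, a, b, hb, hcon, habQ⟩
  have hdist : |α - a / b| ≤ 32 / R / Q ^ 2 := by
    have : α - a / b = (b * α - a) / b := by field_simp
    rw [this, abs_div, abs_of_pos hb0, div_le_iff₀ hb0]
    calc |b * α - a| ≤ 1 / Q := habQ
      _ = 32 / R / Q ^ 2 * (R / 32 * Q) := by field_simp
      _ ≤ _ := by gcongr
  have hsmall : 32 / R / Q ^ 2 ≤ R / 4 := by
    rw [div_div, div_le_iff₀ (by positivity)]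
    nlinarith
  have hrρ : 32 / R / Q ^ 2 + r ≤ ρ := by
    rw [hρ, add_div]
    gcongr
    rw [le_div_iff₀ (by positivity)]
    exact hrQ
  have hsub : Metric.closedBall ((a : ℝ) / b) r ⊆ Metric.closedBall x R := by
    apply Metric.closedBall_subset_closedBall'
    have h1 : dist ((a : ℝ) / b) x ≤ dist ((a : ℝ) / b) α + dist α x := dist_triangle _ _ _
    have h2 : dist ((a : ℝ) / b) α ≤ R / 4 := by
      rw [dist_comm, Real.dist_eq]; exact hdist.trans hsmall
    have h3 := Metric.mem_closedBall.1 hαx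
    linarith
  refine ⟨a, b, hb, hbQ, hsub, le_trans (ENNReal.tsum_le_tsum fun i => ?_) hα₃.le⟩
  by_cases h : (U i ∩ Metric.closedBall ((a : ℝ) / b) r).Nonempty
  · have hx : (U i ∩ Metric.closedBall x R).Nonempty :=
      h.mono (Set.inter_subset_inter_right _ hsub)
    obtain ⟨z, hzU, hz⟩ := h
    have hyz : |z - y i| ≤ d i := hU i z hzU (y i) (hy i ⟨z, hzU⟩)
    have hαy : dist α (y i) ≤ ρ + d i := by
      have h1 : dist α (y i) ≤ dist α z + dist z (y i) := dist_triangle _ _ _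
      have h2 : dist α z ≤ dist α ((a : ℝ) / b) + dist ((a : ℝ) / b) z := dist_triangle _ _ _
      have h3 := Metric.mem_closedBall'.1 hz
      rw [Real.dist_eq z] at h1
      rw [Real.dist_eq α (a / b)] at h2
      linarith
    have hdi : d i < ρ := by
      by_contra! hcon
      apply hα₂ i
      simp only [hW]
      rw [if_pos ⟨hx, hcon⟩]
      exact Metric.mem_closedBall.2 (by linarith)
    have hmem : α ∈ V i := by
      simp only [hV]
      rw [if_pos hdi]
      exact Metric.mem_closedBall.2 (by linarith)
    rw [Set.indicator_of_mem hmem]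
    simp only [he, meetingSize]
    rw [if_pos hx, if_pos ⟨z, hzU, hz⟩]
  · simp only [meetingSize]
    rw [if_neg h, ENNReal.zero_rpow_of_pos hs]
    exact zero_le

theorem exists_cover_of_hausdorffMeasure_eq_zero {s : ℝ} (hs : 0 < s) {E : Set ℝ}
    (hE : μH[s] E = 0) {ε : ℝ≥0∞} (hε : ε ≠ 0) :
    ∃ (U : ℕ → Set ℝ) (d : ℕ → ℝ), E ⊆ ⋃ i, U i ∧ (∀ i, 0 < d i) ∧
      (∀ i, ∀ y ∈ U i, ∀ z ∈ U i, |y - z| ≤ d i) ∧ ∑' i, ENNReal.ofReal (d i) ^ s ≤ ε := by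
  wlog hεt : ε ≠ ⊤ generalizing ε
  · obtain ⟨U, d, h1, h2, h3, -⟩ := this one_ne_zero ENNReal.one_ne_top
    exact ⟨U, d, h1, h2, h3, by rw [not_not.1 hεt]; exact le_top⟩
  rw [Measure.hausdorffMeasure_apply] at hE
  have h1 := (iSup₂_eq_bot.1 hE) 1 one_pos
  have hε2 : ε / 2 ≠ 0 := (ENNReal.half_pos hε).ne'
  have h2 := h1.trans_lt (show (⊥ : ℝ≥0∞) < ε / 2 from ENNReal.half_pos hε)
  simp only [iInf_lt_iff] at h2
  obtain ⟨U, hEU, -, hU⟩ := h2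
  obtain ⟨δ, hδ, hδsum⟩ := ENNReal.exists_pos_sum_of_countable' hε2 ℕ
  set v : ℕ → ℝ≥0∞ := fun i => ⨆ _ : (U i).Nonempty, Metric.ediam (U i) ^ s with hv
  have htop : ε / 2 ≠ ⊤ := ENNReal.div_ne_top hεt (by norm_num)
  have hvt : ∀ i, v i ≠ ⊤ := fun i =>
    ((ENNReal.le_tsum i).trans_lt (hU.trans htop.lt_top)).ne
  have hδt : ∀ i, δ i ≠ ⊤ := fun i =>
    ((ENNReal.le_tsum i).trans_lt (hδsum.trans htop.lt_top)).ne
  set e : ℕ → ℝ≥0∞ := fun i => (v i + δ i) ^ (1 / s) with he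
  have het : ∀ i, e i ≠ ⊤ := fun i =>
    ENNReal.rpow_ne_top_of_nonneg (by positivity) (ENNReal.add_ne_top.2 ⟨hvt i, hδt i⟩)
  have he0 : ∀ i, e i ≠ 0 := fun i =>
    (ENNReal.rpow_pos (by exact lt_of_lt_of_le (hδ i) le_add_self)
      (ENNReal.add_ne_top.2 ⟨hvt i, hδt i⟩)).ne'
  have hes : ∀ i, e i ^ s = v i + δ i := fun i => by
    simp only [he]
    rw [← ENNReal.rpow_mul, one_div_mul_cancel hs.ne', ENNReal.rpow_one]
  refine ⟨U, fun i => (e i).toReal, hEU, fun i => ENNReal.toReal_pos (he0 i) (het i), ?_, ?_⟩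
  · intro i y hy z hz
    have hne : (U i).Nonempty := ⟨y, hy⟩
    have : edist y z ≤ e i := by
      refine (Metric.edist_le_ediam_of_mem hy hz).trans ?_
      rw [← ENNReal.rpow_le_rpow_iff hs, hes]
      refine le_trans ?_ le_self_add
      simp only [hv]
      exact le_iSup (fun _ : (U i).Nonempty => Metric.ediam (U i) ^ s) hne
    rw [← Real.dist_eq, ← ENNReal.ofReal_le_iff_le_toReal (het i), ← edist_dist]
    exact this
  · simp only [ENNReal.ofReal_toReal (het _), hes]
    rw [ENNReal.tsum_add]
    exact (add_le_add hU.le hδsum.le).trans (ENNReal.add_halves ε).le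

/-- A set containing the points of a fixed interval which, for infinitely many `j`, are within
`r j` of a rational of denominator at most `Q j` has positive `s`-dimensional measure, provided that
`(Q j) ^ 2 * (r j) ^ s` is unbounded along indices with `r j` tending to `0`. -/
theorem hausdorffMeasure_ne_zero_of_rational_approximation {s : ℝ} (hs : 0 < s) (hs1 : s < 1)
    {Q r : ℕ → ℝ} (hr : ∀ j, 0 < r j) (hQ : ∀ j, 0 ≤ Q j)
    (hrQ : ∀ j, r j * Q j ^ 2 ≤ 1)
    (hlarge : ∀ T ε : ℝ, 0 < ε → ∀ J : ℕ, ∃ j ≥ J, r j ≤ ε ∧ T ≤ Q j ^ 2 * r j ^ s)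
    {E : Set ℝ} {x₀ R₀ : ℝ} (hR₀ : 0 < R₀) (hR₀1 : R₀ ≤ 1)
    (hE : ∀ α ∈ Metric.closedBall x₀ R₀, (∀ J : ℕ, ∃ j ≥ J, ∃ a b : ℤ, 0 < b ∧ (b : ℝ) ≤ Q j ∧
      |α - a / b| ≤ r j) → α ∈ E) :
    μH[s] E ≠ 0 := by
  intro hzero
  obtain ⟨U, d, hEU, hd, hU, hsum⟩ := exists_cover_of_hausdorffMeasure_eq_zero hs hzero
    (ε := ENNReal.ofReal (R₀ / 100) ^ s)
    (ENNReal.rpow_pos (by simpa using hR₀) (by simp)).ne'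
  let P : ℝ × ℝ → Prop := fun p => 0 < p.2 ∧ p.2 ≤ 1 ∧
    ∑' i, meetingSize U d p.1 p.2 i ^ s ≤ ENNReal.ofReal (p.2 / 100) ^ s
  have hstep : ∀ (k : ℕ) (p : {p // P p}), ∃ p' : {p // P p}, p'.1.2 ≤ p.1.2 / 4 ∧
      Metric.closedBall p'.1.1 p'.1.2 ⊆ Metric.closedBall p.1.1 p.1.2 ∧
      ∃ j ≥ k, ∃ a b : ℤ, 0 < b ∧ (b : ℝ) ≤ Q j ∧ p'.1.1 = a / b ∧ p'.1.2 = r j := by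
    rintro k ⟨⟨x, R⟩, hR, hR1, hp⟩
    dsimp only at hR hR1 hp ⊢
    obtain ⟨j, hjk, hjr, hjT⟩ := hlarge
      (max 1 (max (128 / R ^ 2) (32 * (32 / R + 1) * R ^ s / R))) (R / 4) (by positivity) k
    simp only [max_le_iff] at hjT
    obtain ⟨h1, h2, h3⟩ := hjT
    have hrs : r j ^ s ≤ 1 := Real.rpow_le_one (hr j).le (by linarith) hs.le
    have hQ2 : Q j ^ 2 * r j ^ s ≤ Q j ^ 2 := mul_le_of_le_one_right (by positivity) hrs
    have hQ1 : 1 ≤ Q j := by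
      have := hQ j
      nlinarith
    obtain ⟨a, b, hb, hbQ, hsub, hinv⟩ := exists_sub_ball_of_tsum_meetingSize_le hs hs1 hU
      (x := x) (R := R) (Q := Q j) (r := r j) hR hR1 (hr j) hjr hQ1 (hrQ j)
      (by rw [div_le_iff₀ (by positivity)] at h2; nlinarith [sq_nonneg R])
      (by rw [div_le_iff₀ hR] at h3; linarith) hp
    exact ⟨⟨(a / b, r j), hr j, by dsimp only; linarith, hinv⟩, hjr, hsub, j, hjk, a, b, hb, hbQ,
      rfl, rfl⟩
  choose F hF4 hFsub hFj using hstep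
  have hP₀ : P (x₀, R₀) := by
    refine ⟨hR₀, hR₀1, le_trans (ENNReal.tsum_le_tsum fun i => ?_) hsum⟩
    gcongr
    unfold meetingSize
    split_ifs
    · exact le_rfl
    · exact zero_le
  let p : ℕ → {p // P p} := fun n => Nat.rec ⟨(x₀, R₀), hP₀⟩ (fun k q => F k q) n
  have hp : ∀ k, p (k + 1) = F k (p k) := fun k => rfl
  let K : ℕ → Set ℝ := fun k => Metric.closedBall (p k).1.1 (p k).1.2
  have hKsub : ∀ k, K (k + 1) ⊆ K k := fun k => by
    simp only [K, hp]; exact hFsub k (p k)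
  obtain ⟨α, hα⟩ := IsCompact.nonempty_iInter_of_sequence_nonempty_isCompact_isClosed K hKsub
    (fun k => Metric.nonempty_closedBall.2 (p k).2.1.le) (isCompact_closedBall _ _)
    (fun k => Metric.isClosed_closedBall)
  rw [Set.mem_iInter] at hα
  have hαE : α ∈ E := by
    refine hE α (hα 0) fun J => ?_
    obtain ⟨j, hj, a, b, hb, hbQ, h1, h2⟩ := hFj J (p J)
    refine ⟨j, hj, a, b, hb, hbQ, ?_⟩
    have := Metric.mem_closedBall.1 (hα (J + 1))
    rwa [hp, h1, h2, Real.dist_eq] at this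
  obtain ⟨i, hi⟩ := Set.mem_iUnion.1 (hEU hαE)
  have hdi : ∀ k, d i ≤ (p k).1.2 := fun k => by
    have h1 := ENNReal.le_of_tsum_rpow_le hs (p k).2.2.2 i
    have h2 : (U i ∩ Metric.closedBall (p k).1.1 (p k).1.2).Nonempty := ⟨α, hi, hα k⟩
    unfold meetingSize at h1
    rw [if_pos h2] at h1
    have h0 := (p k).2.1
    rw [ENNReal.ofReal_le_ofReal_iff (by positivity)] at h1
    linarith
  have hgeom : ∀ k, (p k).1.2 ≤ (1 / 4 : ℝ) ^ k := fun k => by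
    induction k with
    | zero => simpa using (p 0).2.2.1
    | succ k ih =>
      rw [hp, pow_succ]
      linarith [hF4 k (p k)]
  obtain ⟨k, hk⟩ := exists_pow_lt_of_lt_one (hd i) (show (1 / 4 : ℝ) < 1 by norm_num)
  linarith [hdi k, hgeom k]

/-- The lower order of `f` is nonnegative and at most `1 / 3`, and `f` is at most about `x ^ μ` at
arbitrarily large powers of two, for each `μ` above the lower order. -/
theorem lower_order_bounds {f : ℝ → ℝ} (hf_gt : ∀ x : ℝ, 0 < x → 2 < f x)
    (hf_mono : MonotoneOn f (Set.Ioi (0 : ℝ)))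
    (hf_O : ∃ C : ℝ, 0 < C ∧ ∀ᶠ x : ℝ in atTop,
      f x ≤ C * x ^ ((1 : ℝ) / 3) / (Real.log x) ^ ((7 : ℝ) / 3)) :
    0 ≤ liminf (fun x : ℝ => Real.log (f x) / Real.log x) atTop ∧
    liminf (fun x : ℝ => Real.log (f x) / Real.log x) atTop ≤ 1 / 3 ∧
    ∀ μ, liminf (fun x : ℝ => Real.log (f x) / Real.log x) atTop < μ → μ ≤ 1 →
      ∀ J : ℕ, ∃ j ≥ J, f (2 ^ j) ≤ 2 * ((2 : ℝ) ^ j) ^ μ := by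
  have hlow : ∀ᶠ x : ℝ in atTop, 0 ≤ Real.log (f x) / Real.log x := by
    filter_upwards [eventually_gt_atTop 1] with x hx
    exact div_nonneg (Real.log_nonneg (by linarith [hf_gt x (by linarith)]))
      (Real.log_nonneg hx.le)
  have hup : ∀ᶠ x : ℝ in atTop, Real.log (f x) / Real.log x ≤ 1 / 3 := by
    obtain ⟨C, hC, hO⟩ := hf_O
    have hlog : ∀ᶠ x : ℝ in atTop, C ≤ Real.log x ^ ((7 : ℝ) / 3) :=
      ((tendsto_rpow_atTop (by norm_num)).comp Real.tendsto_log_atTop).eventually_ge_atTop C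
    filter_upwards [hO, hlog, eventually_gt_atTop 1] with x h1 h2 hx
    have hx0 : 0 < x := by linarith
    have hl : 0 < Real.log x := Real.log_pos hx
    have h3 : f x ≤ x ^ ((1 : ℝ) / 3) := by
      refine h1.trans ?_
      rw [div_le_iff₀ (by positivity), mul_comm]
      gcongr
    rw [div_le_iff₀ hl, ← Real.log_rpow hx0]
    exact Real.log_le_log (by linarith [hf_gt x hx0]) h3
  have hcob : IsCoboundedUnder (· ≥ ·) atTop (fun x : ℝ => Real.log (f x) / Real.log x) :=
    IsBoundedUnder.isCoboundedUnder_ge ⟨1 / 3, by simpa using hup⟩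
  have hbdd : IsBoundedUnder (· ≥ ·) atTop (fun x : ℝ => Real.log (f x) / Real.log x) :=
    ⟨0, by simpa using hlow⟩
  refine ⟨le_liminf_of_le hcob hlow, ?_, ?_⟩
  · exact liminf_le_of_frequently_le hup.frequently hbdd
  · intro μ hμ hμ1 J
    have hμ0 : 0 ≤ μ := (le_liminf_of_le hcob hlow).trans hμ.le
    have hfreq := frequently_lt_of_liminf_lt hcob hμ
    obtain ⟨x, hx, hxJ⟩ := (hfreq.and_eventually (eventually_ge_atTop ((2 : ℝ) ^ (J + 1)))).exists
    have hx2 : (2 : ℝ) ≤ x := le_trans (le_self_pow₀ (by norm_num) (by omega)) hxJ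
    have hx0 : 0 < x := by linarith
    obtain ⟨j, hj1, hj2⟩ := exists_nat_pow_near (y := (2 : ℝ)) (x := x) (by linarith) (by norm_num)
    refine ⟨j, ?_, ?_⟩
    · have := (pow_lt_pow_iff_right₀ (one_lt_two (α := ℝ))).1 (hxJ.trans_lt hj2)
      omega
    · have h1 : f (2 ^ j) ≤ f x := hf_mono (by simp) hx0 hj1
      rw [div_lt_iff₀ (Real.log_pos (by linarith)), ← Real.log_rpow hx0] at hx
      have h2 : f x < x ^ μ :=
        (Real.log_lt_log_iff (by linarith [hf_gt x hx0]) (by positivity)).1 hx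
      have h3 : x ^ μ ≤ ((2 : ℝ) ^ j * 2) ^ μ := by
        gcongr; rw [← pow_succ]; exact hj2.le
      rw [Real.mul_rpow (by positivity) (by norm_num)] at h3
      have h4 : (2 : ℝ) ^ μ ≤ 2 := by
        simpa using Real.rpow_le_rpow_of_exponent_le (one_le_two (α := ℝ)) hμ1
      have h5 : (0 : ℝ) < ((2 : ℝ) ^ j) ^ μ := by positivity
      nlinarith

/-- If `0 ≤ μ ≤ 1 / 2` and `s < 1 / (1 + μ)`, then the exponent gained is positive. -/
theorem exponent_pos {s μ : ℝ} (hμ0 : 0 ≤ μ) (hμ : μ ≤ 1 / 2) (h : s * (1 + μ) < 1) :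
    0 < 2 - 2 * s + μ * (s - 2) := by
  have : 0 < (1 + μ) * (2 - 2 * s + μ * (s - 2)) := by
    nlinarith [mul_nonneg hμ0 (sub_nonneg.2 hμ)]
  exact pos_of_mul_pos_right this (by linarith)

theorem rpow_div_le_sq_mul_rpow {X F θ s μ : ℝ} (hX : 0 < X) (hF : 0 < F) (hθ : 0 < θ)
    (hs0 : 0 < s) (hs : s < 1) (hFX : F ≤ 2 * X ^ μ) :
    X ^ (2 - 2 * s + μ * (s - 2)) / (36 * θ) ≤
      (X / (F * √θ) / 3) ^ 2 * (F / X ^ 2) ^ s := by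
  have h1 : (X / (F * √θ) / 3) ^ 2 * (F / X ^ 2) ^ s = X ^ (2 - 2 * s) * F ^ (s - 2) / (9 * θ) := by
    rw [Real.div_rpow hF.le (by positivity), ← Real.rpow_natCast X 2, ← Real.rpow_mul hX.le,
      Real.rpow_sub hX, Real.rpow_sub hF]
    have : √θ ^ 2 = θ := Real.sq_sqrt hθ.le
    simp only [div_pow, mul_pow, this, Nat.cast_ofNat, Real.rpow_two]
    field_simp
    norm_num
  have h2 : (2 * X ^ μ) ^ (s - 2) ≤ F ^ (s - 2) :=
    Real.rpow_le_rpow_of_nonpos hF hFX (by linarith)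
  have h3 : (1 / 4 : ℝ) ≤ 2 ^ (s - 2) := by
    calc (1 / 4 : ℝ) = 2 ^ (-2 : ℝ) := by
          rw [Real.rpow_neg (by norm_num), Real.rpow_two]; norm_num
      _ ≤ _ := Real.rpow_le_rpow_of_exponent_le (by norm_num) (by linarith)
  rw [Real.mul_rpow (by norm_num) (by positivity), ← Real.rpow_mul hX.le] at h2
  rw [h1, Real.rpow_add hX, div_le_div_iff₀ (by positivity) (by positivity)]
  have h4 : 1 / 4 * X ^ (μ * (s - 2)) ≤ F ^ (s - 2) :=
    le_trans (by gcongr) h2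
  have h5 : 0 < X ^ (2 - 2 * s) * θ := by positivity
  nlinarith [mul_le_mul_of_nonneg_left h4 h5.le]

/-- A point within `δ / B` of a rational of denominator at most `B / 3` satisfies
`‖n α‖ ≤ δ` for some `n` between `2 B / 3` and `B`. -/
theorem exists_dni_le_of_abs_sub_div_le {α B δ : ℝ} {a b : ℤ} (hb : 0 < b)
    (hbB : (b : ℝ) ≤ B / 3) (h : |α - a / b| ≤ δ / B) :
    ∃ n : ℕ, 2 / 3 * B ≤ n ∧ (n : ℝ) ≤ B ∧ dni (n * α) ≤ δ := by
  have hb0 : (0 : ℝ) < b := by exact_mod_cast hb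
  have hB : 0 < B := by linarith
  obtain ⟨c, rfl⟩ : ∃ c : ℕ, (c : ℤ) = b := ⟨b.toNat, Int.toNat_of_nonneg hb.le⟩
  simp only [Int.cast_natCast] at *
  set k : ℕ := ⌊B / c⌋₊
  have hk1 : (k : ℝ) * c ≤ B := by
    rw [← le_div_iff₀ hb0]; exact Nat.floor_le (by positivity)
  have hk2 : B < (k + 1) * c := by
    rw [← div_lt_iff₀ hb0]; exact Nat.lt_floor_add_one _
  refine ⟨k * c, ?_, by exact_mod_cast hk1, ?_⟩
  · push_cast; linarith
  · unfold dni
    refine (round_le _ ((k : ℤ) * a)).trans ?_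
    push_cast
    have : (k : ℝ) * c * α - k * a = (k * c) * (α - a / c) := by field_simp
    rw [this, abs_mul, abs_of_nonneg (by positivity)]
    calc (k : ℝ) * c * |α - a / c| ≤ B * (δ / B) := by gcongr
      _ = δ := by field_simp

theorem hausdorff_dimension_of_well_approximable_set
    (f : ℝ → ℝ)
    (hf_gt : ∀ x : ℝ, 0 < x → 2 < f x)
    (hf_mono : MonotoneOn f (Set.Ioi (0 : ℝ)))
    (hf_top : Tendsto f atTop atTop)
    (hf_O : ∃ C : ℝ, 0 < C ∧ ∀ᶠ x : ℝ in atTop,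
      f x ≤ C * x ^ ((1 : ℝ) / 3) / (Real.log x) ^ ((7 : ℝ) / 3))
    (hconv : Summable fun n : ℕ => 1 / ((n : ℝ) * f n))
    (hsup : ∃ x₀ : ℝ, 0 < x₀ ∧ ∃ K : ℝ, K < 2 ∧ ∀ x : ℝ, x₀ ≤ x → f (2 * x) / f x ≤ K)
    (ϑ : ℝ → ℝ) (hϑ : ϑ = fun x : ℝ => 1 + Real.log x) :
    ∃ C : ℝ, 0 < C ∧
      ENNReal.ofReal
          (1 / (1 + Filter.liminf (fun x : ℝ => Real.log (f x) / Real.log x) atTop)) ≤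
        dimH {α : ℝ | α ∈ Set.Ioo (0 : ℝ) 1 ∧
          ∀ J : ℕ, ∃ j : ℕ, J ≤ j ∧ 1 ≤ j ∧ ∃ n : ℕ,
            bsmall f ϑ j ≤ (n : ℝ) ∧ (n : ℝ) ≤ Bbig f ϑ j ∧
            dni ((n : ℝ) * α) ≤ C * ((2 : ℝ) ^ j)⁻¹ * (Real.sqrt (ϑ ((2 : ℝ) ^ j)))⁻¹} := by
  obtain ⟨hl0, hl1, hfreq⟩ := lower_order_bounds hf_gt hf_mono hf_O
  set l := liminf (fun x : ℝ => Real.log (f x) / Real.log x) atTop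
  refine ⟨1, one_pos, le_of_forall_lt fun c hc => ?_⟩
  obtain ⟨s, hcs, hs⟩ := ENNReal.lt_iff_exists_nnreal_btwn.1 hc
  refine hcs.trans_le (le_dimH_of_hausdorffMeasure_ne_zero ?_)
  have hs0 : 0 < (s : ℝ) := by
    have : (0 : ℝ≥0∞) < s := lt_of_le_of_lt zero_le hcs
    exact_mod_cast this
  have hsl : (s : ℝ) < 1 / (1 + l) := by
    rw [ENNReal.lt_ofReal_iff_toReal_lt (by simp)] at hs
    simpa using hs
  obtain ⟨μ, hlμ, hμ, hsμ⟩ : ∃ μ, l < μ ∧ μ ≤ 1 / 2 ∧ (s : ℝ) * (1 + μ) < 1 := by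
    have h1 : l < 1 / s - 1 := by
      have : 1 + l < 1 / s := by
        rw [lt_div_iff₀ hs0]; rw [lt_div_iff₀ (by linarith)] at hsl; linarith
      linarith
    obtain ⟨μ, h2, h3⟩ := exists_between (lt_min h1 (show l < 1 / 2 by linarith))
    refine ⟨μ, h2, (h3.trans_le (min_le_right _ _)).le, ?_⟩
    have h4 : 1 + μ < 1 / s := by linarith [h3.trans_le (min_le_left _ _)]
    rw [lt_div_iff₀ hs0] at h4
    linarith
  have hμ0 : 0 ≤ μ := hl0.trans hlμ.le
  have hs1 : (s : ℝ) < 1 := by nlinarith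
  have hexp := exponent_pos hμ0 hμ hsμ
  have hX : ∀ j : ℕ, (1 : ℝ) ≤ 2 ^ j := fun j => one_le_pow₀ (by norm_num)
  have hF : ∀ j : ℕ, 2 < f (2 ^ j) := fun j => hf_gt _ (by positivity)
  have hθ : ∀ j : ℕ, 1 ≤ ϑ (2 ^ j) := fun j => by
    rw [hϑ]; linarith [Real.log_nonneg (hX j)]
  have hB : ∀ j, 0 < Bbig f ϑ j := fun j => by
    have := hF j
    have := hθ j
    unfold Bbig
    positivity
  have hrB : ∀ j, f (2 ^ j) / ((2 : ℝ) ^ j) ^ 2 =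
      1 * ((2 : ℝ) ^ j)⁻¹ * (√(ϑ ((2 : ℝ) ^ j)))⁻¹ / Bbig f ϑ j := fun j => by
    have := hF j
    have := hθ j
    unfold Bbig
    field_simp
  refine hausdorffMeasure_ne_zero_of_rational_approximation hs0 hs1
    (Q := fun j => Bbig f ϑ j / 3) (r := fun j => f (2 ^ j) / ((2 : ℝ) ^ j) ^ 2)
    (x₀ := 1 / 2) (R₀ := 1 / 4) ?_ ?_ ?_ ?_ (by norm_num) (by norm_num) ?_
  · intro j
    have := hF j
    positivity
  · exact fun j => (div_pos (hB j) (by norm_num)).le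
  · intro j
    have h1 := hF j
    have h2 := hθ j
    have h3 : √(ϑ (2 ^ j)) ^ 2 = ϑ (2 ^ j) := Real.sq_sqrt (by linarith)
    have : f (2 ^ j) / ((2 : ℝ) ^ j) ^ 2 * (Bbig f ϑ j / 3) ^ 2 =
        1 / (9 * f (2 ^ j) * ϑ (2 ^ j)) := by
      simp only [Bbig, div_pow, mul_pow, h3]
      field_simp
      norm_num
    rw [this, div_le_one (by positivity)]
    nlinarith
  · intro T ε hε J
    have hpow : Tendsto (fun j : ℕ => (2 : ℝ) ^ j) atTop atTop :=
      tendsto_pow_atTop_atTop_of_one_lt one_lt_two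
    have hbig : ∀ᶠ X : ℝ in atTop,
        max T 1 * (36 * (1 + Real.log X)) ≤ X ^ (2 - 2 * (s : ℝ) + μ * (s - 2)) := by
      have hT : 0 < max T 1 := by positivity
      have h1 := ((isLittleO_log_rpow_atTop hexp).def
        (show 0 < 1 / (2 * 36 * max T 1) by positivity))
      have h2 := (tendsto_rpow_atTop hexp).eventually_ge_atTop (2 * 36 * max T 1)
      filter_upwards [h1, h2, eventually_ge_atTop 1] with X h1 h2 hX
      rw [Real.norm_of_nonneg (Real.log_nonneg hX), Real.norm_of_nonneg (by positivity),
        one_div_mul_eq_div, le_div_iff₀ (by positivity)] at h1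
      linarith
    obtain ⟨J', hJ'⟩ := eventually_atTop.1
      ((hpow.eventually hbig).and (hpow.eventually (eventually_ge_atTop (2 / ε))))
    obtain ⟨j, hj, hfj⟩ := hfreq μ hlμ (by linarith) (max J J')
    obtain ⟨h1, h2⟩ := hJ' j ((le_max_right _ _).trans hj)
    refine ⟨j, (le_max_left _ _).trans hj, ?_, ?_⟩
    · have h3 : ((2 : ℝ) ^ j) ^ μ ≤ 2 ^ j := by
        simpa using Real.rpow_le_rpow_of_exponent_le (hX j) (show μ ≤ 1 by linarith)
      have h4 := hX j
      rw [div_le_iff₀ hε] at h2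
      rw [div_le_iff₀ (by positivity)]
      nlinarith
    · have h3 := rpow_div_le_sq_mul_rpow (X := 2 ^ j) (by positivity)
        (by linarith [hF j]) (by linarith [hθ j] : 0 < ϑ (2 ^ j)) hs0 hs1 hfj
      refine le_trans ?_ h3
      have h5 := hθ j
      rw [le_div_iff₀ (by positivity)]
      refine le_trans ?_ h1
      rw [hϑ] at h5 ⊢
      exact mul_le_mul_of_nonneg_right (le_max_left _ _) (by linarith)
  · intro α hα hαj
    rw [Metric.mem_closedBall, Real.dist_eq, abs_le] at hα
    refine ⟨⟨by linarith, by linarith⟩, fun J => ?_⟩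
    obtain ⟨j, hj, a, b, hb, hbQ, hab⟩ := hαj (max J 1)
    rw [hrB] at hab
    obtain ⟨n, h1, h2, h3⟩ := exists_dni_le_of_abs_sub_div_le hb hbQ hab
    exact ⟨j, (le_max_left _ _).trans hj, (le_max_right _ _).trans hj, n, h1, h2, h3⟩
end

section
/- (Bourgain) Let (a_n)_{n≥1} be a strictly increasing sequence of positive integers such that E(A_N) = Ω(N³), i.e. there exists c > 0 with E(A_N) > cN³ for infinitely many N. Then the set NPPC((a_n)_n) has positive Lebesgue measure. -/
open Filter MeasureTheory
open scoped Classical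

/-- Additive energy of a finite set of naturals:
`#{(a,b,c,d) ∈ I⁴ : a + b = c + d}`. -/
def addEnergy (A : Finset ℕ) : ℕ :=
  (((A ×ˢ A) ×ˢ (A ×ˢ A)).filter fun q => q.1.1 + q.1.2 = q.2.1 + q.2.2).card

/-- The truncation `A_N = {a_n : 1 ≤ n ≤ N}`. -/
def trunc (a : ℕ → ℕ) (N : ℕ) : Finset ℕ := (Finset.Icc 1 N).image a

/-- Pair correlation function `R([-s,s], α, N)`. -/
noncomputable def pcf (a : ℕ → ℕ) (s α : ℝ) (N : ℕ) : ℝ :=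
  (((Finset.Icc 1 N ×ˢ Finset.Icc 1 N).filter fun p =>
      p.1 ≠ p.2 ∧ dni (α * (a p.1 : ℝ) - α * (a p.2 : ℝ)) ≤ s / N).card : ℝ) / N

/-- `(α a_n)_n` has Poissonian pair correlations. -/
def hasPPC (a : ℕ → ℕ) (α : ℝ) : Prop :=
  ∀ s : ℝ, 0 ≤ s → Tendsto (fun N => pcf a s α N) atTop (nhds (2 * s))

/-- The exceptional set `NPPC((a_n)_n)` of `α ∈ (0,1)` without PPC. -/
def NPPC (a : ℕ → ℕ) : Set ℝ := {α | α ∈ Set.Ioo (0 : ℝ) 1 ∧ ¬ hasPPC a α}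

/-- The distance to the nearest integer is the norm on the unit circle. -/
lemma dni_eq_norm (x : ℝ) : dni x = ‖(x : UnitAddCircle)‖ := UnitAddCircle.norm_eq.symm

lemma continuous_dni : Continuous dni := by
  simp only [funext dni_eq_norm]
  exact continuous_norm.comp (AddCircle.continuous_mk' 1)

lemma dni_periodic : Function.Periodic dni 1 := by
  intro x
  simp only [dni_eq_norm, AddCircle.coe_add_period]

lemma dni_eq_abs {x : ℝ} (hx : x ∈ Set.Ioo (-(1 / 2) : ℝ) (1 / 2)) : dni x = |x| := by
  have h : round x = 0 := by
    rw [round_eq, Int.floor_eq_zero_iff]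
    constructor <;> linarith [hx.1, hx.2]
  simp [dni, h]

/-- The indicator of the points within distance `δ` of an integer. -/
noncomputable def nearInt (δ x : ℝ) : ℝ := if dni x ≤ δ then 1 else 0

lemma measurable_nearInt (δ : ℝ) : Measurable (nearInt δ) :=
  Measurable.ite (measurableSet_le continuous_dni.measurable measurable_const)
    measurable_const measurable_const

lemma nearInt_nonneg (δ x : ℝ) : 0 ≤ nearInt δ x := by
  unfold nearInt; split_ifs <;> norm_num

lemma nearInt_le_one (δ x : ℝ) : nearInt δ x ≤ 1 := by
  unfold nearInt; split_ifs <;> norm_num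

lemma intervalIntegrable_nearInt_comp (δ : ℝ) {f : ℝ → ℝ} (hf : Measurable f) (u v : ℝ) :
    IntervalIntegrable (fun x => nearInt δ (f x)) volume u v := by
  refine (intervalIntegrable_const (c := (1 : ℝ))).mono_fun
    ((measurable_nearInt δ).comp hf).aestronglyMeasurable (ae_of_all _ fun x => ?_)
  simp [abs_of_nonneg (nearInt_nonneg δ (f x)), nearInt_le_one]

lemma nearInt_periodic (δ : ℝ) : Function.Periodic (nearInt δ) 1 := by
  intro x
  simp only [nearInt, dni_periodic x]

lemma integral_nearInt {δ : ℝ} (h0 : 0 ≤ δ) (h1 : δ < 1 / 2) :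
    ∫ x in (0 : ℝ)..1, nearInt δ x = 2 * δ := by
  have hper := (nearInt_periodic δ).intervalIntegral_add_eq 0 (-(1 / 2))
  rw [zero_add] at hper
  rw [hper, intervalIntegral.integral_of_le (by norm_num), integral_Ioc_eq_integral_Ioo]
  have hcongr : ∫ x in Set.Ioo (-(1 / 2) : ℝ) (-(1 / 2) + 1), nearInt δ x
      = ∫ x in Set.Ioo (-(1 / 2) : ℝ) (-(1 / 2) + 1), (Set.Icc (-δ) δ).indicator 1 x := by
    refine setIntegral_congr_fun measurableSet_Ioo fun x hx => ?_
    have hx' : x ∈ Set.Ioo (-(1 / 2) : ℝ) (1 / 2) := ⟨hx.1, by linarith [hx.2]⟩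
    simp [nearInt, dni_eq_abs hx', Set.indicator_apply, abs_le]
  have hsub : Set.Icc (-δ) δ ∩ Set.Ioo (-(1 / 2) : ℝ) (-(1 / 2) + 1) = Set.Icc (-δ) δ :=
    Set.inter_eq_left.2 fun x hx => ⟨by linarith [hx.1], by linarith [hx.2]⟩
  rw [hcongr, integral_indicator_one measurableSet_Icc, measureReal_restrict_apply measurableSet_Icc,
    hsub, Real.volume_real_Icc_of_le (by linarith)]
  ring

/-- Multiplication by a nonzero integer preserves the measure of an arc of the circle. -/
lemma integral_nearInt_mul_int {δ : ℝ} (h0 : 0 ≤ δ) (h1 : δ < 1 / 2) {d : ℤ} (hd : d ≠ 0) :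
    ∫ x in (0 : ℝ)..1, nearInt δ (x * d) = 2 * δ := by
  have hd' : (d : ℝ) ≠ 0 := by exact_mod_cast hd
  have hz := (nearInt_periodic δ).intervalIntegral_add_zsmul_eq d 0
    fun u v => intervalIntegrable_nearInt_comp δ measurable_id u v
  rw [intervalIntegral.integral_comp_mul_right _ hd']
  simp only [zero_add, zsmul_eq_mul, mul_one, integral_nearInt h0 h1] at hz
  simp only [zero_mul, one_mul, hz, smul_eq_mul]
  field_simp

/-- Index pairs with the same difference of values as `p`. -/
noncomputable def sameDiff (a : ℕ → ℕ) (N : ℕ) (p : ℕ × ℕ) : Finset (ℕ × ℕ) :=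
  (Finset.Icc 1 N ×ˢ Finset.Icc 1 N).filter fun q =>
    (a q.1 : ℤ) - a q.2 = (a p.1 : ℤ) - a p.2

/-- Off-diagonal index pairs. -/
noncomputable def offPairs (N : ℕ) : Finset (ℕ × ℕ) :=
  (Finset.Icc 1 N ×ˢ Finset.Icc 1 N).filter fun p => p.1 ≠ p.2

/-- Off-diagonal index pairs whose difference of values is attained at least `t` times. -/
noncomputable def popularPairs (a : ℕ → ℕ) (N : ℕ) (t : ℝ) : Finset (ℕ × ℕ) :=
  (offPairs N).filter fun p => t ≤ ((sameDiff a N p).card : ℝ)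

lemma popularPairs_subset (a : ℕ → ℕ) (N : ℕ) (t : ℝ) : popularPairs a N t ⊆ offPairs N :=
  Finset.filter_subset _ _

lemma addEnergy_trunc_le (a : ℕ → ℕ) (N : ℕ) :
    addEnergy (trunc a N) ≤ ∑ p ∈ Finset.Icc 1 N ×ˢ Finset.Icc 1 N, (sameDiff a N p).card := by
  rw [← Finset.card_sigma]
  unfold addEnergy
  refine Finset.card_le_card_of_surjOn
    (fun x => ((a x.1.1, a x.2.2), (a x.1.2, a x.2.1))) ?_
  rintro ⟨⟨w, x⟩, ⟨y, z⟩⟩ h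
  simp only [trunc, Finset.coe_filter, Finset.mem_product, Finset.mem_image, Set.mem_ofPred_eq] at h
  obtain ⟨⟨⟨⟨i, hi, rfl⟩, ⟨j, hj, rfl⟩⟩, ⟨k, hk, rfl⟩, ⟨l, hl, rfl⟩⟩, h⟩ := h
  refine ⟨⟨(i, k), (l, j)⟩, ?_, rfl⟩
  simp only [Finset.coe_sigma, Set.mem_sigma_iff, sameDiff, Finset.mem_coe, Finset.mem_product,
    Finset.mem_filter]
  refine ⟨⟨hi, hk⟩, ⟨hl, hj⟩, ?_⟩
  omega

lemma card_sameDiff_le {a : ℕ → ℕ} (ha : Set.InjOn a (Set.Ici 1)) (N : ℕ) (p : ℕ × ℕ) :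
    (sameDiff a N p).card ≤ N := by
  have h : (sameDiff a N p).card ≤ (Finset.Icc 1 N).card := by
    refine Finset.card_le_card_of_injOn Prod.fst ?_ ?_
    · intro q hq
      simp only [sameDiff, Finset.coe_filter, Finset.mem_product, Set.mem_ofPred_eq] at hq
      exact hq.1.1
    · rintro ⟨i, j⟩ hq ⟨i', j'⟩ hq' (rfl : i = i')
      simp only [sameDiff, Finset.coe_filter, Finset.mem_product, Set.mem_ofPred_eq,
        Finset.mem_Icc] at hq hq'
      have : j = j' := ha hq.1.2.1 hq'.1.2.1 (by omega)
      rw [this]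
  simpa using h

/-- Large additive energy forces many popular pairs. -/
lemma addEnergy_trunc_le_popularPairs {a : ℕ → ℕ} (ha : Set.InjOn a (Set.Ici 1)) (N : ℕ) {t : ℝ}
    (ht : 0 ≤ t) :
    (addEnergy (trunc a N) : ℝ) ≤
      (popularPairs a N t).card * N + t * (N : ℝ) ^ 2 + (N : ℝ) ^ 2 := by
  have hsplit : ∀ p ∈ Finset.Icc 1 N ×ˢ Finset.Icc 1 N, ((sameDiff a N p).card : ℝ) ≤
      (if p ∈ popularPairs a N t then (N : ℝ) else 0) + t + (if p.1 = p.2 then (N : ℝ) else 0) := by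
    intro p hp
    have hle : ((sameDiff a N p).card : ℝ) ≤ N := by exact_mod_cast card_sameDiff_le ha N p
    have hN : (0 : ℝ) ≤ N := Nat.cast_nonneg N
    by_cases hd : p.1 = p.2
    · rw [if_pos hd]
      split_ifs <;> linarith
    by_cases hg : t ≤ ((sameDiff a N p).card : ℝ)
    · have hmem : p ∈ popularPairs a N t :=
        Finset.mem_filter.2 ⟨Finset.mem_filter.2 ⟨hp, hd⟩, hg⟩
      rw [if_pos hmem, if_neg hd]
      linarith
    · rw [if_neg hd]
      split_ifs <;> linarith
  have hdiag : ((Finset.Icc 1 N ×ˢ Finset.Icc 1 N).filter fun p => p.1 = p.2).card ≤ N := by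
    have h : ((Finset.Icc 1 N ×ˢ Finset.Icc 1 N).filter fun p => p.1 = p.2).card
        ≤ (Finset.Icc 1 N).card := by
      refine Finset.card_le_card_of_injOn Prod.fst ?_ ?_
      · intro q hq
        simp only [Finset.coe_filter, Finset.mem_product, Set.mem_ofPred_eq] at hq
        exact hq.1.1
      · rintro ⟨i, j⟩ hq ⟨i', j'⟩ hq' (rfl : i = i')
        simp only [Finset.coe_filter, Set.mem_ofPred_eq] at hq hq'
        rw [← hq.2, ← hq'.2]
    simpa using h
  have hpop : (Finset.Icc 1 N ×ˢ Finset.Icc 1 N).filter (fun p => p ∈ popularPairs a N t)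
      = popularPairs a N t := by
    ext p
    simp only [Finset.mem_filter, popularPairs, offPairs]
    tauto
  calc (addEnergy (trunc a N) : ℝ)
      ≤ ∑ p ∈ Finset.Icc 1 N ×ˢ Finset.Icc 1 N, ((sameDiff a N p).card : ℝ) := by
        exact_mod_cast addEnergy_trunc_le a N
    _ ≤ _ := Finset.sum_le_sum hsplit
    _ ≤ _ := by
        rw [Finset.sum_add_distrib, Finset.sum_add_distrib, ← Finset.sum_filter,
          ← Finset.sum_filter, hpop]
        simp only [Finset.sum_const, nsmul_eq_mul, Finset.card_product, Nat.card_Icc,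
          Nat.add_sub_cancel, Nat.cast_mul]
        have : (((Finset.Icc 1 N ×ˢ Finset.Icc 1 N).filter fun p => p.1 = p.2).card : ℝ) * N
            ≤ N * N := by gcongr
        linarith

lemma card_offPairs_le (N : ℕ) : ((offPairs N).card : ℝ) ≤ (N : ℝ) ^ 2 := by
  have h : (offPairs N).card ≤ N * N := by
    simpa [offPairs] using Finset.card_filter_le (Finset.Icc 1 N ×ˢ Finset.Icc 1 N) fun p => p.1 ≠ p.2
  rw [sq]
  exact_mod_cast h

/-- The indicator that `α` times the difference of values of `p` is within `δ` of an integer. -/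
noncomputable def pairInd (a : ℕ → ℕ) (δ : ℝ) (p : ℕ × ℕ) (α : ℝ) : ℝ :=
  nearInt δ (α * (((a p.1 : ℤ) - a p.2 : ℤ) : ℝ))

lemma intervalIntegrable_pairInd (a : ℕ → ℕ) (δ : ℝ) (p : ℕ × ℕ) :
    IntervalIntegrable (pairInd a δ p) volume 0 1 :=
  intervalIntegrable_nearInt_comp δ (measurable_id.mul_const _) 0 1

lemma intervalIntegrable_sum_pairInd_div (a : ℕ → ℕ) (δ r : ℝ) (S : Finset (ℕ × ℕ)) :
    IntervalIntegrable (fun α => (∑ p ∈ S, pairInd a δ p α) / r) volume 0 1 := by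
  have h := (IntervalIntegrable.sum S fun p _ => intervalIntegrable_pairInd a δ p).div_const r
  simpa only [Finset.sum_apply] using h

lemma pcf_eq_sum (a : ℕ → ℕ) (s α : ℝ) (N : ℕ) :
    pcf a s α N = (∑ p ∈ offPairs N, pairInd a (s / N) p α) / N := by
  simp only [pcf, pairInd, nearInt, offPairs, ← Finset.filter_filter, Finset.card_filter,
    Nat.cast_sum, Nat.cast_ite, Nat.cast_one, Nat.cast_zero]
  congr! 5
  push_cast
  ring

lemma integral_sum_pairInd {a : ℕ → ℕ} (ha : Set.InjOn a (Set.Ici 1)) {N : ℕ} {δ : ℝ} (h0 : 0 ≤ δ)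
    (h1 : δ < 1 / 2) {S : Finset (ℕ × ℕ)} (hS : S ⊆ offPairs N) :
    ∫ α in (0 : ℝ)..1, ∑ p ∈ S, pairInd a δ p α = S.card * (2 * δ) := by
  rw [intervalIntegral.integral_finsetSum fun p _ => intervalIntegrable_pairInd a δ p,
    ← nsmul_eq_mul, ← Finset.sum_const]
  refine Finset.sum_congr rfl fun p hp => integral_nearInt_mul_int h0 h1 ?_
  have hp' := hS hp
  simp only [offPairs, Finset.mem_filter, Finset.mem_product, Finset.mem_Icc] at hp'
  intro h
  exact hp'.2 (ha hp'.1.1.1 hp'.1.2.1 (by omega))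

/-- If some popular pair is close to an integer, then the whole class of that pair is counted. -/
lemma le_pcf_of_popular {a : ℕ → ℕ} (ha : Set.InjOn a (Set.Ici 1)) {N : ℕ} {t s α : ℝ} {p : ℕ × ℕ}
    (hp : p ∈ popularPairs a N t) (hα : pairInd a (s / N) p α ≠ 0) : t / N ≤ pcf a s α N := by
  rw [pcf_eq_sum]
  gcongr
  simp only [popularPairs, offPairs, Finset.mem_filter, Finset.mem_product, Finset.mem_Icc] at hp
  obtain ⟨⟨⟨hp1, hp2⟩, hne⟩, ht⟩ := hp
  refine ht.trans ?_
  have hone : pairInd a (s / N) p α = 1 := by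
    unfold pairInd nearInt at hα ⊢
    by_contra h
    split_ifs at hα h <;> simp_all
  have hsub : sameDiff a N p ⊆ offPairs N := by
    intro q hq
    simp only [sameDiff, offPairs, Finset.mem_filter] at hq ⊢
    refine ⟨hq.1, fun h => hne (ha hp1.1 hp2.1 ?_)⟩
    have := hq.2
    rw [h] at this
    omega
  calc ((sameDiff a N p).card : ℝ) = ∑ q ∈ sameDiff a N p, pairInd a (s / N) q α := by
        rw [Finset.card_eq_sum_ones, Nat.cast_sum]
        refine Finset.sum_congr rfl fun q hq => ?_
        rw [Nat.cast_one, ← hone, pairInd, pairInd, (Finset.mem_filter.1 hq).2]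
    _ ≤ _ := Finset.sum_le_sum_of_subset_of_nonneg hsub fun _ _ _ => nearInt_nonneg _ _

/-- The contribution of the popular pairs is dominated by the deviation of `pcf` from `2 s`. -/
lemma sum_popularPairs_le {a : ℕ → ℕ} (ha : Set.InjOn a (Set.Ici 1)) {N : ℕ} (hN : 0 < N)
    {s : ℝ} (α : ℝ) :
    (∑ p ∈ popularPairs a N (4 * s * N), pairInd a (s / N) p α) / N
      ≤ 2 * |pcf a s α N - 2 * s| := by
  have hN' : (0 : ℝ) < N := by exact_mod_cast hN
  by_cases h : ∀ p ∈ popularPairs a N (4 * s * N), pairInd a (s / N) p α = 0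
  · rw [Finset.sum_eq_zero h, zero_div]
    positivity
  push Not at h
  obtain ⟨p, hp, hne⟩ := h
  have h4 : 4 * s ≤ pcf a s α N := by
    have := le_pcf_of_popular ha hp hne
    rwa [mul_div_assoc, div_self hN'.ne', mul_one] at this
  have hle : (∑ p ∈ popularPairs a N (4 * s * N), pairInd a (s / N) p α) / N ≤ pcf a s α N := by
    rw [pcf_eq_sum]
    gcongr
    · exact fun _ _ _ => nearInt_nonneg _ _
    · exact popularPairs_subset a N _
  linarith [le_abs_self (pcf a s α N - 2 * s)]

lemma intervalIntegrable_pcf (a : ℕ → ℕ) (s : ℝ) (N : ℕ) :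
    IntervalIntegrable (fun α => pcf a s α N) volume 0 1 := by
  simp only [pcf_eq_sum]
  exact intervalIntegrable_sum_pairInd_div a _ _ _

lemma intervalIntegrable_lower_deviation (a : ℕ → ℕ) (s : ℝ) (N : ℕ) :
    IntervalIntegrable (fun α => max (2 * s - pcf a s α N) 0) volume 0 1 := by
  have h := (intervalIntegrable_const (c := 2 * s)).sub (intervalIntegrable_pcf a s N)
  exact ⟨h.1.pos_part, h.2.pos_part⟩

lemma pcf_nonneg (a : ℕ → ℕ) (s α : ℝ) (N : ℕ) : 0 ≤ pcf a s α N := by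
  unfold pcf; positivity

/-- The proportion of popular pairs is controlled by the mean lower deviation of `pcf`. -/
lemma popularPairs_card_le {a : ℕ → ℕ} (ha : Set.InjOn a (Set.Ici 1)) {N : ℕ} (hN : 0 < N)
    {s : ℝ} (hs : 0 ≤ s) (hsN : 2 * s < N) :
    s * (popularPairs a N (4 * s * N)).card / (N : ℝ) ^ 2
      ≤ 2 * ∫ α in (0 : ℝ)..1, max (2 * s - pcf a s α N) 0 := by
  have hN' : (0 : ℝ) < N := by exact_mod_cast hN
  have h0 : 0 ≤ s / N := by positivity
  have h1 : s / N < 1 / 2 := by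
    rw [div_lt_iff₀ hN']; linarith
  have hR := intervalIntegrable_pcf a s N
  have hM := intervalIntegrable_lower_deviation a s N
  have hIR : ∫ α in (0 : ℝ)..1, pcf a s α N ≤ 2 * s := by
    simp only [pcf_eq_sum]
    rw [intervalIntegral.integral_div, integral_sum_pairInd ha h0 h1 subset_rfl]
    calc ((offPairs N).card : ℝ) * (2 * (s / N)) / N ≤ (N : ℝ) ^ 2 * (2 * (s / N)) / N := by
          gcongr; exact card_offPairs_le N
      _ = 2 * s := by field_simp
  have hmono : ∫ α in (0 : ℝ)..1,
        (∑ p ∈ popularPairs a N (4 * s * N), pairInd a (s / N) p α) / N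
      ≤ ∫ α in (0 : ℝ)..1, (4 * max (2 * s - pcf a s α N) 0 + 2 * (pcf a s α N - 2 * s)) := by
    refine intervalIntegral.integral_mono zero_le_one ?_ ?_ fun α => ?_
    · exact intervalIntegrable_sum_pairInd_div a _ _ _
    · exact (hM.const_mul 4).add ((hR.sub intervalIntegrable_const).const_mul 2)
    · refine (sum_popularPairs_le ha hN α).trans ?_
      rcases le_total (pcf a s α N) (2 * s) with h | h
      · rw [abs_of_nonpos (by linarith), max_eq_left (by linarith)]
        linarith
      · rw [abs_of_nonneg (by linarith), max_eq_right (by linarith)]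
        linarith
  rw [intervalIntegral.integral_div,
    integral_sum_pairInd ha h0 h1 (popularPairs_subset a N _),
    intervalIntegral.integral_add (hM.const_mul 4) ((hR.sub intervalIntegrable_const).const_mul 2),
    intervalIntegral.integral_const_mul, intervalIntegral.integral_const_mul,
    intervalIntegral.integral_sub hR intervalIntegrable_const,
    intervalIntegral.integral_const] at hmono
  have hrw : ((popularPairs a N (4 * s * N)).card : ℝ) * (2 * (s / N)) / N
      = 2 * (s * (popularPairs a N (4 * s * N)).card / (N : ℝ) ^ 2) := by
    field_simp
  rw [hrw] at hmono
  simp only [sub_zero, smul_eq_mul, one_mul] at hmono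
  linarith

/-- If the exceptional set is null, the mean lower deviation of `pcf` tends to zero. -/
lemma tendsto_integral_lower_deviation {a : ℕ → ℕ} (h : volume (NPPC a) = 0) {s : ℝ}
    (hs : 0 ≤ s) :
    Tendsto (fun N => ∫ α in (0 : ℝ)..1, max (2 * s - pcf a s α N) 0) atTop (nhds 0) := by
  have key := intervalIntegral.tendsto_integral_filter_of_dominated_convergence
    (μ := volume) (a := 0) (b := 1) (l := atTop)
    (F := fun N α => max (2 * s - pcf a s α N) 0) (f := fun _ => (0 : ℝ)) (fun _ => 2 * s)
    (Eventually.of_forall fun N => ?_) (Eventually.of_forall fun N => ae_of_all _ fun α _ => ?_)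
    intervalIntegrable_const ?_
  · simpa using key
  · exact (intervalIntegrable_lower_deviation a s N).def'.aestronglyMeasurable
  · rw [Real.norm_of_nonneg (le_max_right _ _)]
    exact max_le (by linarith [pcf_nonneg a s α N]) (by linarith)
  · have hone : ∀ᵐ α : ℝ, α ≠ 1 := by simp [ae_iff]
    filter_upwards [measure_eq_zero_iff_ae_notMem.1 h, hone] with α hα hα1 hmem
    rw [Set.uIoc_of_le zero_le_one] at hmem
    have hP : hasPPC a α := by
      by_contra hn
      exact hα ⟨⟨hmem.1, lt_of_le_of_ne hmem.2 hα1⟩, hn⟩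
    simpa using ((tendsto_const_nhds (x := 2 * s)).sub (hP s hs)).max
      (tendsto_const_nhds (x := (0 : ℝ)) (f := atTop))

theorem positive_measure_of_large_energy
    (a : ℕ → ℕ) (ha : ∀ n, 1 ≤ n → a n < a (n + 1)) (hpos : 0 < a 1)
    (c : ℝ) (hc : 0 < c)
    (hE : ∀ N₀ : ℕ, ∃ N, N₀ ≤ N ∧ c * (N : ℝ) ^ 3 < (addEnergy (trunc a N) : ℝ)) :
    0 < volume (NPPC a) := by
  have hinj : Set.InjOn a (Set.Ici 1) :=
    (strictMonoOn_of_lt_add_one Set.ordConnected_Ici fun n _ hn _ => ha n hn).injOn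
  rw [pos_iff_ne_zero]
  intro h
  have hs : 0 ≤ c / 8 := by positivity
  have hlim := tendsto_integral_lower_deviation h hs
  have hsmall := hlim.eventually_lt_const (u := c / 8 * (c / 4) / 2) (by positivity)
  have hlarge := (tendsto_natCast_atTop_atTop (R := ℝ)).eventually_gt_atTop (2 * (c / 8) + 4 / c)
  obtain ⟨N₀, hN₀⟩ := eventually_atTop.1 (hsmall.and hlarge)
  obtain ⟨N, hN, hEN⟩ := hE N₀
  obtain ⟨hint, hNbig⟩ := hN₀ N hN
  have hc4 : 0 < 4 / c := by positivity
  have hN' : (0 : ℝ) < N := by linarith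
  have hcN : 4 < c * N := by
    have : 4 / c < N := by linarith
    rw [div_lt_iff₀ hc] at this
    linarith
  have hcard := popularPairs_card_le hinj (by exact_mod_cast hN') hs (by linarith)
  have hen := addEnergy_trunc_le_popularPairs hinj N (t := 4 * (c / 8) * N) (by positivity)
  have hlow : c / 4 * (N : ℝ) ^ 2 ≤ (popularPairs a N (4 * (c / 8) * N)).card := by
    refine le_of_mul_le_mul_right ?_ hN'
    have : 4 * (N : ℝ) ^ 2 ≤ c * N * (N : ℝ) ^ 2 := by gcongr
    nlinarith
  have : c / 8 * (c / 4) ≤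
      c / 8 * (popularPairs a N (4 * (c / 8) * N)).card / (N : ℝ) ^ 2 := by
    rw [le_div_iff₀ (by positivity), mul_assoc]
    gcongr
  linarith
end
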